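/- arXiv:2206.12182 — 2 statements merged into one kernel-verified Lean document; each statement's English description precedes it below -/
import Mathlib

section
/- Let Γ be a finite simple graph and let W = W(Γ) be the associated right-angled Coxeter group. Let N be any finitely generated normal subgroup of W. Then W/N is virtually a RACG, i.e., there exist a finite simple graph Δ and a finite index subgroup of W/N isomorphic to the right-angled Coxeter group W(Δ). -/
/-- The defining relators of a right-angled Coxeter group: squares of the generators and
commutators of generators corresponding to adjacent vertices. -/
def racgRels {V : Type} (Γ : SimpleGraph V) : Set (FreeGroup V) :=
  { r | (∃ v : V, r = FreeGroup.of v * FreeGroup.of v) ∨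
      ∃ v w : V, Γ.Adj v w ∧
        r = FreeGroup.of v * FreeGroup.of w * (FreeGroup.of v)⁻¹ * (FreeGroup.of w)⁻¹ }

/-- The right-angled Coxeter group associated to the simple graph `Γ`. -/
abbrev RACG {V : Type} (Γ : SimpleGraph V) : Type := PresentedGroup (racgRels Γ)

/-!
Call the fixed set of a conjugate of the generator `v` a wall of type `v`. Either `N` lies in the
special subgroup generated by the vertices other than `v`, or every wall of type `v` separates two
points of the `N`-orbit of the base chamber: the normality of `N` spreads this property from one
wall of type `v` to all of them. In the second case the walls of type `v` fall into finitely many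
`N`-orbits, since `N` has finitely many generators and each of them crosses finitely many walls;
hence the image of `v` in `W/N` has finitely many conjugates.

Let `A` be the set of vertices of the first kind. Then `N` lies in the special subgroup of the
complement of `A`, which the retraction of `W` onto `W_A` kills, so `W_A` embeds in `W/N`. By
Dietzmann's lemma the images of the remaining vertices normally generate a finite subgroup of `W/N`,
and together with `W_A` it generates `W/N`, so `W_A` has finite index.
-/

section FiniteNormalClosure

variable {G : Type*} [Group G]

/-- The conjugate of `a` attached to a coset of its centralizer: `g C(a) ↦ g a g⁻¹`. -/
def conjOfCoset (a : G) : G ⧸ Subgroup.centralizer {a} → G :=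
  Quotient.lift (fun g => g * a * g⁻¹) fun g h hgh => by
    have hcomm := Subgroup.mem_centralizer_singleton_iff.mp (QuotientGroup.leftRel_apply.mp hgh)
    calc g * a * g⁻¹ = g * (a * (g⁻¹ * h)) * h⁻¹ := by group
      _ = g * ((g⁻¹ * h) * a) * h⁻¹ := by rw [hcomm]
      _ = h * a * h⁻¹ := by group

@[simp]
theorem conjOfCoset_mk (a g : G) :
    conjOfCoset a (g : G ⧸ Subgroup.centralizer {a}) = g * a * g⁻¹ :=
  rfl

theorem conjOfCoset_injective (a : G) : Function.Injective (conjOfCoset a) := by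
  intro x y
  induction x using QuotientGroup.induction_on with | H g
  induction y using QuotientGroup.induction_on with | H h
  intro hgh
  rw [conjOfCoset_mk, conjOfCoset_mk] at hgh
  refine QuotientGroup.eq.mpr (Subgroup.mem_centralizer_singleton_iff.mpr ?_)
  calc g⁻¹ * h * a = g⁻¹ * (h * a * h⁻¹) * h := by group
    _ = g⁻¹ * (g * a * g⁻¹) * h := by rw [hgh]
    _ = a * (g⁻¹ * h) := by group

theorem finiteIndex_centralizer_of_finite_conjugatesOf {a : G} (ha : (conjugatesOf a).Finite) :
    (Subgroup.centralizer {a}).FiniteIndex := by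
  have hmem : ∀ x, conjOfCoset a x ∈ conjugatesOf a := fun x =>
    QuotientGroup.induction_on x fun g => isConj_iff.mpr ⟨g, rfl⟩
  have : Finite (conjugatesOf a) := ha
  have : Finite (G ⧸ Subgroup.centralizer {a}) :=
    .of_injective (Set.codRestrict _ _ hmem) ((conjOfCoset_injective a).codRestrict hmem)
  exact Subgroup.finiteIndex_of_finite_quotient

open scoped IsMulCommutative in
/-- The transfer `g ↦ g ^ [G : Z(G)]` is a homomorphism to the centre, so the elements of finite
order form a subgroup. -/
theorem isMulTorsion_of_closure_eq_top [(Subgroup.center G).FiniteIndex] {s : Set G}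
    (hs : Subgroup.closure s = ⊤) (hord : ∀ a ∈ s, IsOfFinOrder a) :
    IsMulTorsion G := by
  intro g
  let transfer := MonoidHom.transferCenterPow G
  have hle : Subgroup.closure s ≤ (CommGroup.torsion (Subgroup.center G)).comap transfer :=
    (Subgroup.closure_le _).mpr fun a ha => transfer.isOfFinOrder (hord a ha)
  have hg : IsOfFinOrder (transfer g) := hle (hs ▸ Subgroup.mem_top g)
  have hpow : IsOfFinOrder (g ^ (Subgroup.center G).index) :=
    (Subgroup.center G).subtype.isOfFinOrder hg
  exact hpow.of_pow Subgroup.FiniteIndex.index_ne_zero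

open scoped IsMulCommutative in
theorem finite_of_closure_eq_top {s : Set G} (hfin : s.Finite) (hs : Subgroup.closure s = ⊤)
    (hord : ∀ a ∈ s, IsOfFinOrder a)
    (hcent : ∀ a ∈ s, (Subgroup.centralizer {a}).FiniteIndex) : Finite G := by
  have : Finite s := hfin
  have : (Subgroup.center G).FiniteIndex := by
    rw [Subgroup.center_eq_infi' hs]
    exact Subgroup.finiteIndex_iInf fun a => hcent a a.2
  have : Group.FG G := Group.fg_iff.mpr ⟨s, hs, hfin⟩
  have : Finite (Subgroup.center G) :=
    CommGroup.finite_of_fg_isMulTorsion _ ((isMulTorsion_of_closure_eq_top hs hord).subgroup _)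
  exact .of_subgroup_quotient (Subgroup.center G)

/-- **Dietzmann's lemma**. -/
theorem finite_normalClosure {s : Set G} (hfin : s.Finite) (hord : ∀ a ∈ s, IsOfFinOrder a)
    (hconj : ∀ a ∈ s, (conjugatesOf a).Finite) : Finite (Subgroup.normalClosure s) := by
  set K := Subgroup.normalClosure s
  let t : Set K := (↑) ⁻¹' Group.conjugatesOfSet s
  have ht : t.Finite :=
    (hfin.biUnion hconj).preimage Subtype.val_injective.injOn
  refine finite_of_closure_eq_top ht Subgroup.closure_closure_coe_preimage ?_ ?_
  · intro k hk
    obtain ⟨a, ha, hak⟩ := Group.mem_conjugatesOfSet_iff.mp hk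
    exact Submonoid.isOfFinOrder_coe.mp (hak.isOfFinOrder (hord a ha))
  · intro k hk
    obtain ⟨a, ha, hak⟩ := Group.mem_conjugatesOfSet_iff.mp hk
    have : (Subgroup.centralizer {(k : G)}).FiniteIndex :=
      finiteIndex_centralizer_of_finite_conjugatesOf (hak.conjugatesOf_eq ▸ hconj a ha)
    refine Subgroup.finiteIndex_of_le (H := (Subgroup.centralizer {(k : G)}).subgroupOf K) ?_
    intro x hx
    rw [Subgroup.mem_subgroupOf, Subgroup.mem_centralizer_singleton_iff] at hx
    exact Subgroup.mem_centralizer_singleton_iff.mpr (Subtype.ext hx)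

theorem finiteIndex_of_sup_eq_top {K H : Subgroup G} [K.Normal] [Finite K] (hKH : K ⊔ H = ⊤) :
    H.FiniteIndex := by
  have hsurj : Function.Surjective fun k : K => ((k : G) : G ⧸ H) := fun x =>
    QuotientGroup.induction_on x fun g => by
      obtain ⟨k, hk, h, hh, rfl⟩ :=
        Subgroup.mem_sup_of_normal_left.mp (hKH ▸ Subgroup.mem_top g)
      exact ⟨⟨k, hk⟩, QuotientGroup.eq.mpr (by simpa using hh)⟩
  have := Finite.of_surjective _ hsurj
  exact Subgroup.finiteIndex_of_finite_quotient

end FiniteNormalClosure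

namespace RACG

open groupCohomology

variable {V : Type} {Γ : SimpleGraph V}

section Generators

/-- The standard generator of `RACG Γ` attached to a vertex. -/
def gen (Γ : SimpleGraph V) (v : V) : RACG Γ := PresentedGroup.of v

@[simp]
theorem gen_mul_self (v : V) : gen Γ v * gen Γ v = 1 :=
  PresentedGroup.one_of_mem (rels := racgRels Γ) (Or.inl ⟨v, rfl⟩)

@[simp]
theorem inv_gen (v : V) : (gen Γ v)⁻¹ = gen Γ v :=
  inv_eq_of_mul_eq_one_left (gen_mul_self v)

theorem commute_gen {v w : V} (h : Γ.Adj v w) : Commute (gen Γ v) (gen Γ w) := by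
  have hrel : gen Γ v * gen Γ w * (gen Γ v)⁻¹ * (gen Γ w)⁻¹ = 1 :=
    PresentedGroup.one_of_mem (rels := racgRels Γ) (Or.inr ⟨v, w, h, rfl⟩)
  exact mul_inv_eq_iff_eq_mul.mp (mul_inv_eq_one.mp hrel)

theorem isOfFinOrder_gen (v : V) : IsOfFinOrder (gen Γ v) :=
  isOfFinOrder_iff_pow_eq_one.mpr ⟨2, two_pos, by rw [sq, gen_mul_self]⟩

theorem closure_range_gen : Subgroup.closure (Set.range (gen Γ)) = ⊤ :=
  PresentedGroup.closure_range_of _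

/-- The universal property of `RACG Γ`. -/
def lift {G : Type*} [Group G] (f : V → G) (hsq : ∀ v, f v * f v = 1)
    (hcomm : ∀ v w, Γ.Adj v w → Commute (f v) (f w)) : RACG Γ →* G :=
  PresentedGroup.toGroup (f := f) (rels := racgRels Γ) <| by
    rintro r (⟨v, rfl⟩ | ⟨v, w, hvw, rfl⟩)
    · simp [hsq]
    · simp [(hcomm v w hvw).eq]

@[simp]
theorem lift_gen {G : Type*} [Group G] (f : V → G) (hsq : ∀ v, f v * f v = 1)
    (hcomm : ∀ v w, Γ.Adj v w → Commute (f v) (f w)) (v : V) :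
    lift f hsq hcomm (gen Γ v) = f v :=
  PresentedGroup.toGroup.of _

/-- The element of `RACG Γ` spelled by a word in the vertices. -/
def wordProd (Γ : SimpleGraph V) (L : List V) : RACG Γ := (L.map (gen Γ)).prod

@[simp]
theorem wordProd_nil : wordProd Γ [] = 1 := rfl

@[simp]
theorem wordProd_cons (v : V) (L : List V) : wordProd Γ (v :: L) = gen Γ v * wordProd Γ L := by
  simp [wordProd]

@[simp]
theorem wordProd_append (L₁ L₂ : List V) :
    wordProd Γ (L₁ ++ L₂) = wordProd Γ L₁ * wordProd Γ L₂ := by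
  simp [wordProd]

theorem wordProd_surjective : Function.Surjective (wordProd Γ) := by
  intro g
  have hg : g ∈ Subgroup.closure (Set.range (gen Γ)) := closure_range_gen ▸ Subgroup.mem_top g
  induction hg using Subgroup.closure_induction_left with
  | one => exact ⟨[], rfl⟩
  | mul_left x hx y _ ih =>
    obtain ⟨v, rfl⟩ := hx
    obtain ⟨L, rfl⟩ := ih
    exact ⟨v :: L, wordProd_cons v L⟩
  | inv_mul_cancel x hx y _ ih =>
    obtain ⟨v, rfl⟩ := hx
    obtain ⟨L, rfl⟩ := ih
    exact ⟨v :: L, by rw [wordProd_cons, inv_gen]⟩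

@[elab_as_elim]
theorem gen_mul_induction {p : RACG Γ → Prop} (one : p 1)
    (gen_mul : ∀ v g, p g → p (gen Γ v * g)) (g : RACG Γ) : p g := by
  obtain ⟨L, rfl⟩ := wordProd_surjective g
  induction L with
  | nil => exact one
  | cons v L ih => exact wordProd_cons (Γ := Γ) v L ▸ gen_mul v _ ih

end Generators

section SpecialSubgroups

/-- The special subgroup `W_A`, generated by the vertices in `A`. -/
def special (Γ : SimpleGraph V) (A : Set V) : Subgroup (RACG Γ) :=
  Subgroup.closure (gen Γ '' A)

theorem gen_mem_special {A : Set V} {v : V} (hv : v ∈ A) : gen Γ v ∈ special Γ A :=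
  Subgroup.subset_closure ⟨v, hv, rfl⟩

theorem special_mono {A B : Set V} (hAB : A ⊆ B) : special Γ A ≤ special Γ B :=
  Subgroup.closure_mono (Set.image_mono hAB)

theorem special_le_iff {A : Set V} {H : Subgroup (RACG Γ)} :
    special Γ A ≤ H ↔ ∀ v ∈ A, gen Γ v ∈ H := by
  rw [special, Subgroup.closure_le, Set.image_subset_iff]
  rfl

theorem special_univ : special Γ Set.univ = ⊤ := by
  rw [special, Set.image_univ, closure_range_gen]

theorem wordProd_mem_special (L : List V) : wordProd Γ L ∈ special Γ {v | v ∈ L} :=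
  Subgroup.list_prod_mem _ fun _ hg => by
    obtain ⟨v, hv, rfl⟩ := List.mem_map.mp hg
    exact gen_mem_special hv

theorem exists_finite_mem_special (g : RACG Γ) : ∃ A : Set V, A.Finite ∧ g ∈ special Γ A := by
  obtain ⟨L, rfl⟩ := wordProd_surjective g
  exact ⟨{v | v ∈ L}, L.finite_toSet, wordProd_mem_special L⟩

theorem exists_finite_le_special {H : Subgroup (RACG Γ)} (hH : H.FG) :
    ∃ A : Set V, A.Finite ∧ H ≤ special Γ A := by
  obtain ⟨S, rfl⟩ := hH
  choose A hAfin hA using exists_finite_mem_special (Γ := Γ)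
  refine ⟨⋃ g ∈ S, A g, S.finite_toSet.biUnion fun g _ => hAfin g, ?_⟩
  exact (Subgroup.closure_le _).mpr fun g hg => special_mono (Set.subset_biUnion_of_mem hg) (hA g)

/-- The map `W(Γ[A]) → W(Γ)` induced by the inclusion of the induced subgraph. -/
def inclusion (Γ : SimpleGraph V) (A : Set V) : RACG (Γ.induce A) →* RACG Γ :=
  lift (fun v => gen Γ v) (fun _ => gen_mul_self _) fun _ _ hvw => commute_gen hvw

@[simp]
theorem inclusion_gen (A : Set V) (v : A) :
    inclusion Γ A (gen (Γ.induce A) v) = gen Γ v :=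
  lift_gen _ _ _ v

open scoped Classical in
/-- The retraction `W(Γ) → W(Γ[A])` killing the vertices outside `A`. -/
noncomputable def restriction (Γ : SimpleGraph V) (A : Set V) : RACG Γ →* RACG (Γ.induce A) :=
  lift (fun v => if hv : v ∈ A then gen (Γ.induce A) ⟨v, hv⟩ else 1)
    (fun v => by split_ifs <;> simp)
    (fun v w hvw => by
      split_ifs with hv hw
      · exact commute_gen (Γ := Γ.induce A) (v := ⟨v, hv⟩) (w := ⟨w, hw⟩) hvw
      all_goals simp)

theorem restriction_gen_of_mem {A : Set V} {v : V} (hv : v ∈ A) :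
    restriction Γ A (gen Γ v) = gen (Γ.induce A) ⟨v, hv⟩ := by
  rw [restriction, lift_gen, dif_pos hv]

theorem restriction_gen_of_notMem {A : Set V} {v : V} (hv : v ∉ A) :
    restriction Γ A (gen Γ v) = 1 := by
  rw [restriction, lift_gen, dif_neg hv]

theorem restriction_inclusion (A : Set V) (g : RACG (Γ.induce A)) :
    restriction Γ A (inclusion Γ A g) = g := by
  induction g using gen_mul_induction with
  | one => simp
  | gen_mul v g ih =>
    rw [map_mul, map_mul, ih, inclusion_gen, restriction_gen_of_mem v.2]

theorem inclusion_restriction {A : Set V} {g : RACG Γ} (hg : g ∈ special Γ A) :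
    inclusion Γ A (restriction Γ A g) = g := by
  refine MonoidHom.eqOn_closure (f := (inclusion Γ A).comp (restriction Γ A))
    (g := MonoidHom.id _) ?_ hg
  rintro _ ⟨v, hv, rfl⟩
  simp [restriction_gen_of_mem hv]

theorem special_compl_le_ker_restriction (A : Set V) :
    special Γ Aᶜ ≤ (restriction Γ A).ker :=
  special_le_iff.mpr fun _ hv => restriction_gen_of_notMem hv

theorem special_inf_special (A B : Set V) :
    special Γ A ⊓ special Γ B = special Γ (A ∩ B) := by
  refine le_antisymm ?_
    (le_inf (special_mono Set.inter_subset_left) (special_mono Set.inter_subset_right))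
  rintro g ⟨hgA, hgB⟩
  let retraction := (inclusion Γ A).comp (restriction Γ A)
  have hmap : special Γ B ≤ (special Γ (A ∩ B)).comap retraction := by
    refine special_le_iff.mpr fun v hvB => ?_
    by_cases hvA : v ∈ A
    · simpa [retraction, restriction_gen_of_mem hvA] using gen_mem_special (Set.mem_inter hvA hvB)
    · simp [retraction, restriction_gen_of_notMem hvA]
  have hg : retraction g ∈ special Γ (A ∩ B) := hmap hgB
  rwa [show retraction g = g from inclusion_restriction hgA] at hg

theorem mem_special_compl_of_finite {B : Set V} (hB : B.Finite) {g : RACG Γ}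
    (hg : ∀ v ∈ B, g ∈ special Γ {v}ᶜ) : g ∈ special Γ Bᶜ := by
  induction B, hB using Set.Finite.induction_on with
  | empty => simp [special_univ]
  | @insert v B _ _ ih =>
    rw [Set.insert_eq, Set.compl_union, ← special_inf_special]
    exact ⟨hg v (Set.mem_insert v B), ih fun w hw => hg w (Set.mem_insert_of_mem v hw)⟩

theorem iInf_special_compl_singleton (B : Set V) :
    ⨅ v ∈ B, special Γ {v}ᶜ = special Γ Bᶜ := by
  refine le_antisymm (fun g hg => ?_)
    (le_iInf₂ fun v hv => special_mono (Set.compl_subset_compl.mpr (by simpa using hv)))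
  simp only [Subgroup.mem_iInf] at hg
  obtain ⟨A, hA, hgA⟩ := exists_finite_mem_special g
  have hgAB : g ∈ special Γ (A ∩ B)ᶜ :=
    mem_special_compl_of_finite (hA.inter_of_left B) fun v hv => hg v hv.2
  have hgmem : g ∈ special Γ (A ∩ (A ∩ B)ᶜ) := (special_inf_special _ _).le ⟨hgA, hgAB⟩
  exact special_mono (fun v hv hvB => hv.2 ⟨hv.1, hvB⟩) hgmem

end SpecialSubgroups

section Walls

/-- The crossed homomorphism is read off from an action of `RACG Γ` on `M` by affine maps. -/
theorem exists_isCocycle₁ {M : Type*} [AddCommGroup M] [DistribMulAction (RACG Γ) M] (c : V → M)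
    (hsq : ∀ v, gen Γ v • c v + c v = 0)
    (hcomm : ∀ v w, Γ.Adj v w → gen Γ v • c w + c v = gen Γ w • c v + c w) :
    ∃ f : RACG Γ → M, IsCocycle₁ f ∧ ∀ v, f (gen Γ v) = c v := by
  let affine : RACG Γ →* Equiv.Perm M :=
    lift (fun v => Equiv.addRight (c v) * MulAction.toPerm (gen Γ v))
      (fun v => Equiv.ext fun m => by
        simp [smul_smul, add_assoc, hsq])
      (fun v w hvw => Equiv.ext fun m => by
        simp [smul_smul, add_assoc, hcomm v w hvw, (commute_gen hvw).eq])
  have affine_gen (v : V) (m : M) : affine (gen Γ v) m = gen Γ v • m + c v :=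
    DFunLike.congr_fun (lift_gen (Γ := Γ) _ _ _ v) m
  have affine_apply (g : RACG Γ) (m : M) : affine g m = g • m + affine g 0 := by
    induction g using gen_mul_induction generalizing m with
    | one => simp
    | gen_mul v g ih =>
      rw [map_mul, Equiv.Perm.mul_apply, Equiv.Perm.mul_apply, affine_gen, affine_gen, ih m,
        smul_add, mul_smul, add_assoc]
  refine ⟨fun g => affine g 0, fun g h => ?_, fun v => by simp [affine_gen]⟩
  calc affine (g * h) 0 = affine g (affine h 0) := by rw [map_mul, Equiv.Perm.mul_apply]
    _ = g • affine h 0 + affine g 0 := affine_apply g _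

/-- The walls of type `v` in the Davis complex of `RACG Γ`, encoded as cosets of the centralizer
of the generator `v`: the coset of `g` is the wall fixed by the reflection `g v g⁻¹`. -/
def Wall (Γ : SimpleGraph V) (v : V) : Type := RACG Γ ⧸ Subgroup.centralizer {gen Γ v}

variable {v : V}

instance : MulAction (RACG Γ) (Wall Γ v) :=
  inferInstanceAs (MulAction (RACG Γ) (RACG Γ ⧸ Subgroup.centralizer {gen Γ v}))

/-- The wall of the reflection `v` itself. -/
def baseWall (Γ : SimpleGraph V) (v : V) : Wall Γ v :=
  ((1 : RACG Γ) : RACG Γ ⧸ Subgroup.centralizer {gen Γ v})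

instance : MulAction.IsPretransitive (RACG Γ) (Wall Γ v) :=
  inferInstanceAs (MulAction.IsPretransitive (RACG Γ) (RACG Γ ⧸ Subgroup.centralizer {gen Γ v}))

theorem smul_baseWall_eq_iff {g : RACG Γ} :
    g • baseWall Γ v = baseWall Γ v ↔ Commute g (gen Γ v) := by
  have hstab : MulAction.stabilizer (RACG Γ) (baseWall Γ v) = Subgroup.centralizer {gen Γ v} :=
    MulAction.stabilizer_quotient _
  rw [← MulAction.mem_stabilizer_iff, hstab]
  exact Subgroup.mem_centralizer_singleton_iff

theorem gen_smul_baseWall : gen Γ v • baseWall Γ v = baseWall Γ v :=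
  smul_baseWall_eq_iff.mpr (Commute.refl _)

noncomputable instance : DistribMulAction (RACG Γ) (Wall Γ v →₀ ZMod 2) :=
  Finsupp.comapDistribMulAction

theorem smul_finsupp_apply (g : RACG Γ) (f : Wall Γ v →₀ ZMod 2) (x : Wall Γ v) :
    (g • f) x = f (g⁻¹ • x) :=
  Finsupp.comapSMul_apply g f x

theorem smul_single (g : RACG Γ) (x : Wall Γ v) (e : ZMod 2) :
    g • Finsupp.single x e = Finsupp.single (g • x) e :=
  Finsupp.comapSMul_single g x e

open scoped Classical in
theorem exists_separation (Γ : SimpleGraph V) (v : V) :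
    ∃ f : RACG Γ → Wall Γ v →₀ ZMod 2, IsCocycle₁ f ∧
      ∀ s, f (gen Γ s) = if s = v then Finsupp.single (baseWall Γ v) 1 else 0 := by
  have two_single : Finsupp.single (baseWall Γ v) (1 : ZMod 2) + Finsupp.single (baseWall Γ v) 1
      = 0 := by
    rw [← Finsupp.single_add, show (1 + 1 : ZMod 2) = 0 from rfl, Finsupp.single_zero]
  have gen_smul_of_adj {s : V} (hs : Γ.Adj s v) :
      gen Γ s • Finsupp.single (baseWall Γ v) (1 : ZMod 2) = Finsupp.single (baseWall Γ v) 1 := by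
    rw [smul_single, smul_baseWall_eq_iff.mpr (commute_gen hs)]
  refine exists_isCocycle₁ _ (fun s => ?_) fun s t hst => ?_
  · by_cases hs : s = v
    · subst hs
      rw [if_pos rfl, smul_single, gen_smul_baseWall, two_single]
    · simp [hs]
  · by_cases hs : s = v
    · subst hs
      simp [hst.ne', gen_smul_of_adj hst.symm]
    · by_cases ht : t = v
      · subst ht
        simp [hst.ne, gen_smul_of_adj hst]
      · simp [hs, ht]

/-- The separation cocycle: `separation Γ v g` is the indicator function of the finite set of
walls of type `v` that separate the base chamber from its translate by `g`. -/
noncomputable def separation (Γ : SimpleGraph V) (v : V) : RACG Γ → Wall Γ v →₀ ZMod 2 :=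
  (exists_separation Γ v).choose

theorem isCocycle₁_separation : IsCocycle₁ (separation Γ v) :=
  (exists_separation Γ v).choose_spec.1

theorem separation_mul_apply (g h : RACG Γ) (x : Wall Γ v) :
    separation Γ v (g * h) x = separation Γ v h (g⁻¹ • x) + separation Γ v g x := by
  rw [isCocycle₁_separation, Finsupp.add_apply, smul_finsupp_apply]

@[simp]
theorem separation_one : separation Γ v 1 = 0 :=
  map_one_of_isCocycle₁ isCocycle₁_separation

theorem separation_inv_apply (g : RACG Γ) (x : Wall Γ v) :
    separation Γ v g⁻¹ x = separation Γ v g (g • x) := by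
  have h := separation_mul_apply g g⁻¹ (g • x)
  rw [mul_inv_cancel, separation_one, inv_smul_smul, Finsupp.zero_apply] at h
  exact CharTwo.add_eq_zero.mp h.symm

theorem separation_gen_of_ne {s : V} (hs : s ≠ v) : separation Γ v (gen Γ s) = 0 := by
  classical
  exact ((exists_separation Γ v).choose_spec.2 s).trans (if_neg hs)

theorem separation_gen_self : separation Γ v (gen Γ v) = Finsupp.single (baseWall Γ v) 1 := by
  classical
  exact ((exists_separation Γ v).choose_spec.2 v).trans (if_pos rfl)

theorem separation_gen_self_apply_of_ne {x : Wall Γ v} (hx : x ≠ baseWall Γ v) :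
    separation Γ v (gen Γ v) x = 0 := by
  rw [separation_gen_self, Finsupp.single_eq_of_ne hx]

theorem separation_eq_zero_of_mem_special {g : RACG Γ} (hg : g ∈ special Γ {v}ᶜ) :
    separation Γ v g = 0 := by
  induction hg using Subgroup.closure_induction with
  | mem _ hx =>
    obtain ⟨s, hs, rfl⟩ := hx
    exact separation_gen_of_ne hs
  | one => exact separation_one
  | mul g h _ _ hg hh => rw [isCocycle₁_separation, hg, hh, smul_zero, add_zero]
  | inv g _ hg => ext x; rw [separation_inv_apply, hg]; rfl

/-- A wall separating the two ends of a gallery is crossed by the gallery. -/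
theorem exists_eq_append_of_separation_ne_zero (L : List V) {x : Wall Γ v}
    (hx : separation Γ v (wordProd Γ L) x ≠ 0) :
    ∃ L₁ L₂, L = L₁ ++ v :: L₂ ∧ wordProd Γ L₁ • baseWall Γ v = x := by
  induction L generalizing x with
  | nil => simp at hx
  | cons s L ih =>
    rw [wordProd_cons, separation_mul_apply] at hx
    by_cases hs : separation Γ v (gen Γ s) x = 0
    · rw [hs, add_zero] at hx
      obtain ⟨L₁, L₂, rfl, hL₁⟩ := ih hx
      exact ⟨s :: L₁, L₂, rfl, by rw [wordProd_cons, mul_smul, hL₁, smul_inv_smul]⟩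
    · obtain rfl : s = v := by
        by_contra hsv
        exact hs (by rw [separation_gen_of_ne hsv, Finsupp.zero_apply])
      have hbase : baseWall Γ s = x := by
        by_contra hne
        exact hs (separation_gen_self_apply_of_ne (Ne.symm hne))
      exact ⟨[], L, rfl, by simpa using hbase⟩

/-- Deletion: if a gallery starting with `v` crosses the wall of `v` again, both crossings can
be removed. -/
theorem exists_shorter_word (L : List V) (hL : separation Γ v (wordProd Γ L) (baseWall Γ v) ≠ 0) :
    ∃ L', L'.length < L.length ∧ wordProd Γ L' = gen Γ v * wordProd Γ L := by
  obtain ⟨L₁, L₂, rfl, hL₁⟩ := exists_eq_append_of_separation_ne_zero L hL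
  refine ⟨L₁ ++ L₂, by simp, ?_⟩
  calc wordProd Γ (L₁ ++ L₂) = wordProd Γ L₁ * (gen Γ v * gen Γ v) * wordProd Γ L₂ := by simp
    _ = wordProd Γ L₁ * gen Γ v * (gen Γ v * wordProd Γ L₂) := by simp only [mul_assoc]
    _ = gen Γ v * wordProd Γ L₁ * (gen Γ v * wordProd Γ L₂) := by
      rw [(smul_baseWall_eq_iff.mp hL₁).eq]
    _ = gen Γ v * wordProd Γ (L₁ ++ v :: L₂) := by simp [mul_assoc]

theorem mem_special_of_separation_eq_zero {g : RACG Γ}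
    (hg : ∀ h ∈ special Γ {v}ᶜ, separation Γ v g (h • baseWall Γ v) = 0) :
    g ∈ special Γ {v}ᶜ := by
  obtain ⟨L, rfl⟩ := wordProd_surjective g
  induction hn : L.length using Nat.strong_induction_on generalizing L with
  | _ n ih =>
    subst hn
    rcases L with _ | ⟨s, L⟩
    · exact one_mem _
    rw [wordProd_cons] at hg ⊢
    rcases eq_or_ne s v with rfl | hs
    · have hbase := hg 1 (one_mem _)
      rw [one_smul, separation_mul_apply, inv_gen, gen_smul_baseWall, separation_gen_self,
        Finsupp.single_eq_same, CharTwo.add_eq_zero] at hbase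
      obtain ⟨L', hlt, hL'⟩ := exists_shorter_word L (hbase ▸ one_ne_zero)
      rw [← hL'] at hg ⊢
      exact ih _ (hlt.trans (Nat.lt_succ_self _)) L' hg rfl
    · refine mul_mem (gen_mem_special hs) (ih _ (Nat.lt_succ_self _) L (fun h hh => ?_) rfl)
      have hgh := hg (gen Γ s * h) (mul_mem (gen_mem_special hs) hh)
      rwa [separation_mul_apply, separation_gen_of_ne hs, Finsupp.zero_apply, add_zero, mul_smul,
        inv_smul_smul] at hgh

end Walls

section NormalSubgroups

variable {v : V} {N : Subgroup (RACG Γ)}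

/-- The walls of type `v` that separate two points of the `N`-orbit of the base chamber. -/
def orbitWalls (v : V) (N : Subgroup (RACG Γ)) : Set (Wall Γ v) :=
  {x | ∃ n ∈ N, separation Γ v n x ≠ 0}

theorem smul_mem_orbitWalls_of_mem {n : RACG Γ} (hn : n ∈ N) {x : Wall Γ v}
    (hx : x ∈ orbitWalls v N) : n • x ∈ orbitWalls v N := by
  obtain ⟨m, hm, hmx⟩ := hx
  by_cases hnx : separation Γ v n (n • x) = 0
  · refine ⟨n * m, mul_mem hn hm, ?_⟩
    rwa [separation_mul_apply, inv_smul_smul, hnx, add_zero]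
  · exact ⟨n, hn, hnx⟩

theorem smul_mem_orbitWalls_of_mem_special [N.Normal] {h : RACG Γ} (hh : h ∈ special Γ {v}ᶜ)
    {x : Wall Γ v} (hx : x ∈ orbitWalls v N) : h • x ∈ orbitWalls v N := by
  obtain ⟨n, hn, hnx⟩ := hx
  refine ⟨h * n * h⁻¹, Subgroup.Normal.conj_mem ‹_› n hn h, ?_⟩
  rwa [separation_mul_apply, separation_mul_apply, separation_eq_zero_of_mem_special hh,
    separation_eq_zero_of_mem_special (inv_mem hh), Finsupp.zero_apply, Finsupp.zero_apply,
    inv_smul_smul, zero_add, add_zero]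

theorem baseWall_mem_orbitWalls [N.Normal] (hN : ¬ N ≤ special Γ {v}ᶜ) :
    baseWall Γ v ∈ orbitWalls v N := by
  obtain ⟨n, hn, hnv⟩ := SetLike.not_le_iff_exists.mp hN
  obtain ⟨h, hh, hne⟩ : ∃ h ∈ special Γ {v}ᶜ, separation Γ v n (h • baseWall Γ v) ≠ 0 := by
    by_contra! hzero
    exact hnv (mem_special_of_separation_eq_zero hzero)
  simpa using smul_mem_orbitWalls_of_mem_special (inv_mem hh) ⟨n, hn, hne⟩

theorem gen_smul_mem_orbitWalls [N.Normal] (hN : ¬ N ≤ special Γ {v}ᶜ) {x : Wall Γ v}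
    (hx : x ∈ orbitWalls v N) : gen Γ v • x ∈ orbitWalls v N := by
  have hbase := baseWall_mem_orbitWalls hN
  obtain ⟨n, hn, hnx⟩ := hx
  have hconj : gen Γ v * n * gen Γ v ∈ N := by
    simpa using Subgroup.Normal.conj_mem ‹N.Normal› n hn (gen Γ v)
  by_cases hvx : gen Γ v • x = baseWall Γ v
  · rwa [hvx]
  by_cases hnbase : n⁻¹ • x = baseWall Γ v
  · have hvx' : gen Γ v • x = (gen Γ v * n * gen Γ v) • baseWall Γ v := by
      rw [mul_smul, gen_smul_baseWall, mul_smul, ← hnbase, smul_inv_smul]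
    exact hvx' ▸ smul_mem_orbitWalls_of_mem hconj hbase
  · have hmove : (gen Γ v * n)⁻¹ • gen Γ v • x = n⁻¹ • x := by
      rw [mul_inv_rev, mul_smul, inv_smul_smul]
    refine ⟨_, hconj, ?_⟩
    rwa [separation_mul_apply, separation_mul_apply, hmove, inv_smul_smul,
      separation_gen_self_apply_of_ne hvx, separation_gen_self_apply_of_ne hnbase,
      zero_add, add_zero]

theorem orbitWalls_eq_univ [N.Normal] (hN : ¬ N ≤ special Γ {v}ᶜ) :
    orbitWalls v N = Set.univ := by
  refine Set.eq_univ_of_forall fun x => ?_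
  obtain ⟨g, rfl⟩ := MulAction.exists_smul_eq (RACG Γ) (baseWall Γ v) x
  induction g using gen_mul_induction with
  | one => simpa using baseWall_mem_orbitWalls hN
  | gen_mul s g ih =>
    rw [mul_smul]
    rcases eq_or_ne s v with rfl | hs
    · exact gen_smul_mem_orbitWalls hN ih
    · exact smul_mem_orbitWalls_of_mem_special (gen_mem_special hs) ih

theorem exists_separation_smul_ne_zero {S : Set (RACG Γ)} {n : RACG Γ}
    (hn : n ∈ Subgroup.closure S) {x : Wall Γ v} (hx : separation Γ v n x ≠ 0) :
    ∃ m ∈ Subgroup.closure S, ∃ s ∈ S, separation Γ v s (m • x) ≠ 0 := by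
  induction hn using Subgroup.closure_induction generalizing x with
  | mem s hs => exact ⟨1, one_mem _, s, hs, by rwa [one_smul]⟩
  | one => simp at hx
  | mul g h hg _ ihg ihh =>
    by_cases hgx : separation Γ v g x = 0
    · rw [separation_mul_apply, hgx, add_zero] at hx
      obtain ⟨m, hm, s, hs, hne⟩ := ihh hx
      exact ⟨m * g⁻¹, mul_mem hm (inv_mem hg), s, hs, by rwa [mul_smul]⟩
    · exact ihg hgx
  | inv g hg ih =>
    rw [separation_inv_apply] at hx
    obtain ⟨m, hm, s, hs, hne⟩ := ih hx
    exact ⟨m * g, mul_mem hm hg, s, hs, by rwa [mul_smul]⟩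

theorem exists_finite_forall_smul_mem [N.Normal] (hfg : N.FG) (hN : ¬ N ≤ special Γ {v}ᶜ) :
    ∃ F : Set (Wall Γ v), F.Finite ∧ ∀ x, ∃ n ∈ N, n • x ∈ F := by
  obtain ⟨S, rfl⟩ := hfg
  refine ⟨⋃ s ∈ S, (separation Γ v s).support,
    S.finite_toSet.biUnion fun s _ => Finset.finite_toSet _, fun x => ?_⟩
  obtain ⟨n, hn, hnx⟩ : x ∈ orbitWalls v _ := orbitWalls_eq_univ hN ▸ Set.mem_univ x
  obtain ⟨m, hm, s, hs, hne⟩ := exists_separation_smul_ne_zero hn hnx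
  exact ⟨m, hm, Set.mem_biUnion hs (Finsupp.mem_support_iff.mpr hne)⟩

theorem finite_conjugatesOf_mk_gen [N.Normal] (hfg : N.FG) (hN : ¬ N ≤ special Γ {v}ᶜ) :
    (conjugatesOf (gen Γ v : RACG Γ ⧸ N)).Finite := by
  obtain ⟨F, hF, hFN⟩ := exists_finite_forall_smul_mem hfg hN
  let conj (x : Wall Γ v) : RACG Γ ⧸ N := (conjOfCoset (gen Γ v) x : RACG Γ)
  refine (hF.image conj).subset fun q hq => ?_
  obtain ⟨q', rfl⟩ := isConj_iff.mp hq
  obtain ⟨g, rfl⟩ := QuotientGroup.mk_surjective q'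
  obtain ⟨n, hn, hnF⟩ := hFN (g : RACG Γ ⧸ Subgroup.centralizer {gen Γ v})
  refine ⟨_, hnF, ?_⟩
  calc ((n * g * gen Γ v * (n * g)⁻¹ : RACG Γ) : RACG Γ ⧸ N)
    _ = g * gen Γ v * (g : RACG Γ ⧸ N)⁻¹ := by
      simp [(QuotientGroup.eq_one_iff n).mpr hn]

theorem injective_mk'_comp_inclusion [N.Normal] {A : Set V} (hN : N ≤ special Γ Aᶜ) :
    Function.Injective ((QuotientGroup.mk' N).comp (inclusion Γ A)) := by
  refine (injective_iff_map_eq_one _).mpr fun g hg => ?_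
  have hgN : inclusion Γ A g ∈ N := (QuotientGroup.eq_one_iff _).mp hg
  rw [← restriction_inclusion A g]
  exact special_compl_le_ker_restriction A (hN hgN)

theorem finiteIndex_range_mk'_comp_inclusion [N.Normal] {A : Set V} (hA : Aᶜ.Finite)
    (hconj : ∀ v ∈ Aᶜ, (conjugatesOf (gen Γ v : RACG Γ ⧸ N)).Finite) :
    ((QuotientGroup.mk' N).comp (inclusion Γ A)).range.FiniteIndex := by
  set K := Subgroup.normalClosure ((fun v => (gen Γ v : RACG Γ ⧸ N)) '' Aᶜ)
  set H := ((QuotientGroup.mk' N).comp (inclusion Γ A)).range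
  have : Finite K := finite_normalClosure (hA.image _)
    (Set.forall_mem_image.mpr fun v _ =>
      (QuotientGroup.mk' N).isOfFinOrder (isOfFinOrder_gen v))
    (Set.forall_mem_image.mpr hconj)
  have hgen : special Γ Set.univ ≤ (K ⊔ H).comap (QuotientGroup.mk' N) := by
    refine special_le_iff.mpr fun v _ => ?_
    by_cases hv : v ∈ A
    · exact Subgroup.mem_sup_right ⟨gen _ ⟨v, hv⟩, by simp⟩
    · exact Subgroup.mem_sup_left (Subgroup.subset_normalClosure ⟨v, hv, rfl⟩)
  refine finiteIndex_of_sup_eq_top (K := K) (eq_top_iff.mpr fun q _ => ?_)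
  obtain ⟨g, rfl⟩ := QuotientGroup.mk_surjective q
  exact hgen (special_univ (Γ := Γ) ▸ Subgroup.mem_top g)

end NormalSubgroups

end RACG

theorem quotient_of_RACG_by_fg_normal_subgroup_is_virtually_RACG_general
    {V : Type} (Γ : SimpleGraph V) (N : Subgroup (RACG Γ)) [N.Normal] (hfg : N.FG) :
    ∃ (A : Set V) (H : Subgroup (RACG Γ ⧸ N)),
      Aᶜ.Finite ∧ H.FiniteIndex ∧ Nonempty (↥H ≃* RACG (Γ.induce A)) := by
  let A : Set V := {v | N ≤ RACG.special Γ {v}ᶜ}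
  have hA : Aᶜ.Finite := by
    obtain ⟨F, hF, hNF⟩ := RACG.exists_finite_le_special hfg
    refine hF.subset fun v hv => ?_
    by_contra hvF
    exact hv (hNF.trans (RACG.special_mono (Set.subset_compl_singleton_iff.mpr hvF)))
  have hN : N ≤ RACG.special Γ Aᶜ :=
    RACG.iInf_special_compl_singleton A ▸ le_iInf₂ fun _ hv => hv
  exact ⟨A, _, hA,
    RACG.finiteIndex_range_mk'_comp_inclusion hA fun _ hv =>
      RACG.finite_conjugatesOf_mk_gen hfg hv,
    ⟨(MonoidHom.ofInjective (RACG.injective_mk'_comp_inclusion hN)).symm⟩⟩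

theorem quotient_of_RACG_by_fg_normal_subgroup_is_virtually_RACG
    {V : Type} [Fintype V] (Γ : SimpleGraph V)
    (N : Subgroup (RACG Γ)) [N.Normal] (hfg : N.FG) :
    ∃ (W : Type) (_ : Fintype W) (Δ : SimpleGraph W) (H : Subgroup (RACG Γ ⧸ N)),
      H.FiniteIndex ∧ Nonempty (↥H ≃* RACG Δ) := by
  obtain ⟨A, H, -, hH, hiso⟩ :=
    quotient_of_RACG_by_fg_normal_subgroup_is_virtually_RACG_general Γ N hfg
  exact ⟨A, Fintype.ofFinite A, Γ.induce A, H, hH, hiso⟩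
end

section
/- Let Γ be a finite simple graph with no central vertices, let (G_v) be a family of nontrivial groups indexed by the vertices of Γ, and let 𝒢 = 𝒢(Γ, {G_v}) be the associated graph product. Let N be a finitely generated full normal subgroup of 𝒢. Then for every vertex v of Γ, the subgroup N · 𝒢(lk(v)) generated by N together with 𝒢(lk(v)) has finite index in 𝒢. -/
/-- The set of defining relators of the graph product: commutators of elements of
vertex groups attached to adjacent vertices. -/
def graphProductRels {V : Type} (Γ : SimpleGraph V) (G : V → Type)
    [∀ v, Group (G v)] : Subgroup (Monoid.CoprodI G) :=
  Subgroup.normalClosure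
    { x | ∃ (v w : V) (g : G v) (h : G w), Γ.Adj v w ∧
        x = Monoid.CoprodI.of g * Monoid.CoprodI.of h *
              (Monoid.CoprodI.of g)⁻¹ * (Monoid.CoprodI.of h)⁻¹ }

instance graphProductRels.normal {V : Type} (Γ : SimpleGraph V) (G : V → Type)
    [∀ v, Group (G v)] : (graphProductRels Γ G).Normal :=
  Subgroup.normalClosure_normal

/-- The graph product of the groups `G v` over the simple graph `Γ`. -/
abbrev GraphProduct {V : Type} (Γ : SimpleGraph V) (G : V → Type)
    [∀ v, Group (G v)] : Type :=
  Monoid.CoprodI G ⧸ graphProductRels Γ G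

/-- The subgroup `𝒢(Δ)` of the graph product generated by the images of the vertex
groups attached to the vertices in the set `S`. -/
def vertexSubgroup {V : Type} (Γ : SimpleGraph V) (G : V → Type)
    [∀ v, Group (G v)] (S : Set V) : Subgroup (GraphProduct Γ G) :=
  Subgroup.closure
    { x | ∃ v ∈ S, ∃ g : G v,
        x = (QuotientGroup.mk (Monoid.CoprodI.of g) : GraphProduct Γ G) }

/-- A set of vertices `S` is a join of two (nonempty) subgraphs if it can be split into
two nonempty pieces every two vertices of which (one from each piece) are adjacent. -/
def IsJoinOfTwo {V : Type} (Γ : SimpleGraph V) (S : Set V) : Prop :=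
  ∃ A B : Set V, A.Nonempty ∧ B.Nonempty ∧ Disjoint A B ∧ A ∪ B = S ∧
    ∀ a ∈ A, ∀ b ∈ B, Γ.Adj a b

/-- `P : Fin k → Set V` is a join decomposition of `Γ` into join-indecomposable pieces:
the pieces are nonempty, partition the vertices, any two vertices in distinct pieces are
adjacent, and no piece is itself a join of two nonempty subgraphs. -/
def IsJoinDecomposition {V : Type} (Γ : SimpleGraph V) {k : ℕ} (P : Fin k → Set V) : Prop :=
  (∀ i, (P i).Nonempty) ∧ (∀ v : V, ∃! i, v ∈ P i) ∧
    (∀ i j, i ≠ j → ∀ a ∈ P i, ∀ b ∈ P j, Γ.Adj a b) ∧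
    (∀ i, ¬ IsJoinOfTwo Γ (P i))

/-- A subgroup `N` of the graph product is full if for a join decomposition of `Γ` into
join-indecomposable pieces `Γ_1, …, Γ_k`, `N` intersects each `𝒢(Γ_i)` nontrivially. -/
def IsFullSubgroup {V : Type} (Γ : SimpleGraph V) (G : V → Type)
    [∀ v, Group (G v)] (N : Subgroup (GraphProduct Γ G)) : Prop :=
  ∀ (k : ℕ) (P : Fin k → Set V), IsJoinDecomposition Γ P →
    ∀ i, N ⊓ vertexSubgroup Γ G (P i) ≠ ⊥

/-- A vertex is central if it is adjacent to every other vertex. -/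
def IsCentralVertex {V : Type} (Γ : SimpleGraph V) (v : V) : Prop :=
  ∀ w : V, w ≠ v → Γ.Adj v w

/-- A group is abelian-by-finite if it has an abelian normal subgroup of finite index. -/
def AbelianByFinite (Q : Type) [Group Q] : Prop :=
  ∃ A : Subgroup Q, A.Normal ∧ A.FiniteIndex ∧ ∀ x y : A, x * y = y * x

/-- A group is finite-by-abelian if it has a finite normal subgroup with abelian quotient,
equivalently a finite normal subgroup containing all commutators. -/
def FiniteByAbelian (Q : Type) [Group Q] : Prop :=
  ∃ F : Subgroup Q, F.Normal ∧ Finite F ∧ ∀ x y : Q, x * y * x⁻¹ * y⁻¹ ∈ F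

/-!
Let `L = 𝒢(lk(v))`. Since `G v` commutes with `L`, the conjugates of `G v` are indexed by the cosets
`gL`, and `𝒢` embeds into the semidirect product of their free product with `𝒢`. This is a version
of the action on the Bass–Serre tree of the splitting of `𝒢` over `L`, in which the reduced words of
the free product replace the paths of the tree.

Write `A` for the set of elements whose word begins with a fixed index. Multiplication by an element
of a vertex group changes the first index only when it creates or cancels the whole word, so `A` is
almost invariant: a translate of `A` differs from `A` only in finitely many cosets of `L`. As `v` is
not central and `N` is not contained in `L`, some `f ∈ N` has a word that begins with this index
and does not end with it. By ping-pong, the powers of `f` move every element into `A` and every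
element out of `A`, so membership in `A` is not constant on any coset of `N`. For finitely many
generators of `N`, membership changes only in finitely many cosets of `L`, and every coset of `N L`
has to contain one of these.

Fullness implies that `N` is not contained in `L`. Let `S` be the join factor containing `v`, and
let `M = N ∩ 𝒢(S)`. If `M ≤ 𝒢(lk(u))` for some but not all `u ∈ S`, then the vertices with this
property and the remaining ones would split `S` as a join, and if it holds for all `u ∈ S`, then
`M = 1`.
-/

section AlmostInvariant

open Filter

variable {H : Type*} [Group H]

/-- An almost invariant set relative to a subgroup `L`, in the sense of the theory of ends of pairs
of groups: every left translate of `A` agrees with `A` outside finitely many cosets `gL`. The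
literature often has right translates and cosets `Lg`; inversion exchanges the two conventions. -/
def IsAlmostInvariant (L : Subgroup H) (A : Set H) : Prop :=
  ∀ s : H, ∀ᶠ g in comap (QuotientGroup.mk : H → H ⧸ L) cofinite, (s * g ∈ A ↔ g ∈ A)

theorem eventually_mul_mem_iff_of_mem_closure {F : Filter H} {S A : Set H}
    (hF : ∀ s ∈ Subgroup.closure S, Tendsto (s * ·) F F)
    (hS : ∀ s ∈ S, ∀ᶠ g in F, (s * g ∈ A ↔ g ∈ A)) {s : H} (hs : s ∈ Subgroup.closure S) :
    ∀ᶠ g in F, (s * g ∈ A ↔ g ∈ A) := by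
  induction hs using Subgroup.closure_induction with
  | mem s hs => exact hS s hs
  | one => simp
  | mul s t _ ht ihs iht =>
    filter_upwards [(hF t ht).eventually ihs, iht] with g hgs hgt
    rw [mul_assoc, hgs, hgt]
  | inv s hs ihs =>
    filter_upwards [(hF s⁻¹ (inv_mem hs)).eventually ihs] with g hg
    rw [← hg, mul_inv_cancel_left]

theorem tendsto_mul_left_comap_mk_cofinite (L : Subgroup H) (s : H) :
    Tendsto (s * ·) (comap (QuotientGroup.mk : H → H ⧸ L) cofinite)
      (comap (QuotientGroup.mk : H → H ⧸ L) cofinite) :=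
  tendsto_comap_iff.2 <| (MulAction.injective s).tendsto_cofinite.comp tendsto_comap

theorem isAlmostInvariant_of_closure_eq_top {L : Subgroup H} {A S : Set H}
    (hS : Subgroup.closure S = ⊤)
    (hA : ∀ s ∈ S, ∀ᶠ g in comap (QuotientGroup.mk : H → H ⧸ L) cofinite, (s * g ∈ A ↔ g ∈ A)) :
    IsAlmostInvariant L A := fun s =>
  eventually_mul_mem_iff_of_mem_closure (fun s _ => tendsto_mul_left_comap_mk_cofinite L s) hA
    (hS ▸ Subgroup.mem_top s)

/-- Finitely many generators of `N` change membership in `A` only on finitely many cosets of `L`.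
On an orbit of `N` disjoint from these cosets, membership in `A` is constant. -/
theorem IsAlmostInvariant.finiteIndex_sup {L N : Subgroup H} [hN : N.Normal] (hfg : N.FG)
    {A : Set H} (hA : IsAlmostInvariant L A) (hNA : ∀ g, ∃ n ∈ N, ¬ (n * g ∈ A ↔ g ∈ A)) :
    (N ⊔ L).FiniteIndex := by
  obtain ⟨S, hS⟩ := hfg
  have hmk (n : H) (hn : n ∈ N) (g : H) : (↑(n * g) : H ⧸ N ⊔ L) = g := by
    rw [eq_comm, QuotientGroup.eq, ← mul_assoc]
    exact Subgroup.mem_sup_left (hN.conj_mem' n hn g)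
  obtain ⟨T, hT, hTA⟩ := mem_comap.1 ((eventually_all_finset S).2 fun s _ => hA s)
  let T' : Set (H ⧸ N ⊔ L) := Subgroup.quotientMapOfLE le_sup_right '' Tᶜ
  let F : Filter H := 𝓟 (QuotientGroup.mk ⁻¹' T'ᶜ)
  have hFN (n : H) (hn : n ∈ Subgroup.closure (S : Set H)) : Tendsto (n * ·) F F :=
    tendsto_principal_principal.2 fun g hg => by
      rwa [Set.mem_preimage, hmk n (hS ▸ hn)]
  have hFS (s : H) (hs : s ∈ (S : Set H)) : ∀ᶠ g in F, (s * g ∈ A ↔ g ∈ A) :=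
    eventually_principal.2 fun g hg =>
      hTA (show (g : H ⧸ L) ∈ T from by_contra fun hgT => hg ⟨g, hgT, rfl⟩) s hs
  have hT' : T' = Set.univ := by
    refine Set.eq_univ_of_forall <| Quotient.ind fun g => by_contra fun hg => ?_
    obtain ⟨n, hn, hng⟩ := hNA g
    exact hng <| eventually_principal.1
      (eventually_mul_mem_iff_of_mem_closure hFN hFS (hS.symm ▸ hn)) g hg
  have : Finite (H ⧸ N ⊔ L) := Set.finite_univ_iff.1 (hT' ▸ (mem_cofinite.1 hT).image _)
  exact Subgroup.finiteIndex_of_finite_quotient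

end AlmostInvariant

section ReducedWords

open Monoid CoprodI

variable {ι : Type*} {M : ι → Type*}

section Monoid

variable [∀ i, Monoid (M i)]

open Classical in
/-- The index of the first syllable of the reduced word of an element of a free product, which is
`none` for the identity. -/
noncomputable def leadingIndex (x : CoprodI M) : Option ι :=
  (Word.equiv x).fstIdx

open Classical in
/-- The number of syllables of the reduced word of an element of a free product. -/
noncomputable def syllableLength (x : CoprodI M) : ℕ :=
  (Word.equiv x).toList.length

open Classical in
theorem wordEquiv_prod_neWord {i j : ι} (w : NeWord M i j) : Word.equiv w.prod = w.toWord :=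
  Word.equiv.apply_symm_apply w.toWord

theorem leadingIndex_prod {i j : ι} (w : NeWord M i j) : leadingIndex w.prod = some i := by
  classical
  rw [leadingIndex, wordEquiv_prod_neWord, Word.fstIdx, NeWord.toWord, NeWord.toList_head?]
  rfl

theorem syllableLength_prod {i j : ι} (w : NeWord M i j) :
    syllableLength w.prod = w.toList.length := by
  classical
  rw [syllableLength, wordEquiv_prod_neWord, NeWord.toWord]

theorem leadingIndex_one : leadingIndex (1 : CoprodI M) = none := by
  classical
  have h : Word.equiv (1 : CoprodI M) = .empty := Word.equiv.apply_symm_apply Word.empty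
  rw [leadingIndex, h]
  rfl

theorem syllableLength_one : syllableLength (1 : CoprodI M) = 0 := by
  classical
  have h : Word.equiv (1 : CoprodI M) = .empty := Word.equiv.apply_symm_apply Word.empty
  rw [syllableLength, h]
  rfl

theorem exists_neWord_prod_eq {x : CoprodI M} (hx : x ≠ 1) :
    ∃ (i j : ι) (w : NeWord M i j), w.prod = x := by
  classical
  obtain ⟨i, j, w, hw⟩ := NeWord.of_word (Word.equiv x) fun h =>
    hx ((Word.equiv.symm_apply_apply x).symm.trans (congrArg Word.prod h))
  exact ⟨i, j, w, (congrArg Word.prod hw).trans (Word.equiv.symm_apply_apply x)⟩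

theorem leadingIndex_eq_none_iff {x : CoprodI M} : leadingIndex x = none ↔ x = 1 := by
  refine ⟨fun h => by_contra fun hx => ?_, fun h => h ▸ leadingIndex_one⟩
  obtain ⟨i, j, w, rfl⟩ := exists_neWord_prod_eq hx
  simp [leadingIndex_prod] at h

theorem leadingIndex_of {i : ι} {a : M i} (ha : a ≠ 1) : leadingIndex (of a) = some i := by
  rw [← NeWord.prod_singleton a ha, leadingIndex_prod]

theorem exists_eq_of_mul (x : CoprodI M) (i : ι) :
    ∃ (a : M i) (y : CoprodI M), x = of a * y ∧ leadingIndex y ≠ some i := by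
  classical
  let p := Word.equivPair i (Word.equiv x)
  refine ⟨p.head, p.tail.prod, ?_, ?_⟩
  · rw [← Word.prod_rcons, ← Word.equivPair_symm, Equiv.symm_apply_apply]
    exact (Word.equiv.symm_apply_apply x).symm
  · rw [leadingIndex, show Word.equiv p.tail.prod = p.tail from Word.equiv.apply_symm_apply _]
    exact p.fstIdx_ne

end Monoid

variable [∀ i, Group (M i)]

theorem leadingIndex_prod_inv {i j : ι} (w : NeWord M i j) : leadingIndex w.prod⁻¹ = some j := by
  rw [← NeWord.inv_prod, leadingIndex_prod]

theorem leadingIndex_mul {x y : CoprodI M} (hx : x ≠ 1) (hxy : leadingIndex x⁻¹ ≠ leadingIndex y) :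
    leadingIndex (x * y) = leadingIndex x := by
  by_cases hy : y = 1
  · rw [hy, mul_one]
  obtain ⟨i, j, w, rfl⟩ := exists_neWord_prod_eq hx
  obtain ⟨k, l, w', rfl⟩ := exists_neWord_prod_eq hy
  rw [leadingIndex_prod_inv, leadingIndex_prod, ne_eq, Option.some_inj] at hxy
  rw [← NeWord.append_prod (hne := hxy), leadingIndex_prod, leadingIndex_prod]

theorem syllableLength_mul {x y : CoprodI M} (hxy : leadingIndex x⁻¹ ≠ leadingIndex y) :
    syllableLength (x * y) = syllableLength x + syllableLength y := by
  by_cases hx : x = 1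
  · rw [hx, one_mul, syllableLength_one, zero_add]
  by_cases hy : y = 1
  · rw [hy, mul_one, syllableLength_one, add_zero]
  obtain ⟨i, j, w, rfl⟩ := exists_neWord_prod_eq hx
  obtain ⟨k, l, w', rfl⟩ := exists_neWord_prod_eq hy
  rw [leadingIndex_prod_inv, leadingIndex_prod, ne_eq, Option.some_inj] at hxy
  rw [← NeWord.append_prod (hne := hxy)]
  simp only [syllableLength_prod, NeWord.toList, List.length_append]

theorem syllableLength_pos {x : CoprodI M} (hx : x ≠ 1) : 0 < syllableLength x := by
  obtain ⟨i, j, w, rfl⟩ := exists_neWord_prod_eq hx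
  rw [syllableLength_prod, List.length_pos_iff]
  exact w.toList_ne_nil

theorem leadingIndex_mul_of {x : CoprodI M} {i : ι} {a : M i} (hx : x ≠ 1) (hxa : x * of a ≠ 1) :
    leadingIndex (x * of a) = leadingIndex x := by
  obtain ⟨b, y, hxy, hy⟩ := exists_eq_of_mul x⁻¹ i
  obtain rfl : x = y⁻¹ * of b⁻¹ := by rw [map_inv, ← mul_inv_rev, ← hxy, inv_inv]
  have leadingIndex_inv_mul (hy₁ : y⁻¹ ≠ 1) (d : M i) :
      leadingIndex (y⁻¹ * of d) = leadingIndex y⁻¹ := by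
    by_cases hd : d = 1
    · rw [hd, map_one, mul_one]
    · exact leadingIndex_mul hy₁ (by rwa [inv_inv, leadingIndex_of hd])
  rw [mul_assoc, ← map_mul] at hxa ⊢
  by_cases hy₁ : y⁻¹ = 1
  · simp only [hy₁, one_mul] at hx hxa ⊢
    rw [leadingIndex_of (ne_of_apply_ne of (by rwa [map_one])),
      leadingIndex_of (ne_of_apply_ne of (by rwa [map_one]))]
  · rw [leadingIndex_inv_mul hy₁, leadingIndex_inv_mul hy₁]

theorem eq_and_eq_one_or_of_not_leadingIndex_iff {x : CoprodI M} {i j : ι} {a : M j}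
    (h : ¬ (leadingIndex (x * of a) = some i ↔ leadingIndex x = some i)) :
    j = i ∧ (x = 1 ∨ x * of a = 1) := by
  have ha : a ≠ 1 := by rintro rfl; simp at h
  by_cases hx : x = 1
  · simp only [hx, one_mul, leadingIndex_of ha, leadingIndex_one] at h
    simpa [hx] using h
  by_cases hxa : x * of a = 1
  · rw [hxa, leadingIndex_one, eq_inv_of_mul_eq_one_left hxa, ← map_inv,
      leadingIndex_of (inv_ne_one.2 ha)] at h
    simpa [hxa] using h
  · simp [leadingIndex_mul_of hx hxa] at h

end ReducedWords

section FreePower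

open Monoid CoprodI

variable {A C K : Type*} [Group K]

/-- The free product of copies of a group `K` indexed by a type `C`. -/
abbrev FreePower (C K : Type*) [Group K] : Type _ :=
  CoprodI fun _ : C => K

namespace FreePower

/-- The inclusion of the copy of `K` with index `c` into a free power of `K`. -/
abbrev of (c : C) : K →* FreePower C K :=
  CoprodI.of (M := fun _ : C => K) (i := c)

variable [Group A] [MulAction A C]

/-- The action of a group on a free power of `K` induced by an action on the indices. -/
def permuteCopies : A →* MulAut (FreePower C K) where
  toFun g := MonoidHom.toMulEquiv (lift fun c => of (g • c)) (lift fun c => of (g⁻¹ • c))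
    (ext_hom _ _ fun c => by ext; simp) (ext_hom _ _ fun c => by ext; simp)
  map_one' := MulEquiv.toMonoidHom_injective <| ext_hom _ _ fun c => by ext; simp
  map_mul' g h := MulEquiv.toMonoidHom_injective <| ext_hom _ _ fun c => by ext; simp [mul_smul]

theorem permuteCopies_of (g : A) (c : C) (a : K) :
    permuteCopies g (of c a) = of (g • c) a :=
  lift_of _ _

theorem exists_neWord_prod_eq_permuteCopies (g : A) {i j : C} (w : NeWord (fun _ : C => K) i j) :
    ∃ w' : NeWord (fun _ : C => K) (g • i) (g • j),
      w'.prod = permuteCopies g w.prod ∧ w'.toList.length = w.toList.length := by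
  induction w with
  | singleton a ha =>
    refine ⟨.singleton a ha, ?_, rfl⟩
    rw [NeWord.prod_singleton, NeWord.prod_singleton, permuteCopies_of]
  | append w₁ hne w₂ ih₁ ih₂ =>
    obtain ⟨w₁', hprod₁, hlength₁⟩ := ih₁
    obtain ⟨w₂', hprod₂, hlength₂⟩ := ih₂
    refine ⟨.append w₁' ((MulAction.injective g).ne hne) w₂', ?_, ?_⟩
    · rw [NeWord.append_prod, NeWord.append_prod, map_mul, hprod₁, hprod₂]
    · rw [NeWord.toList, NeWord.toList, List.length_append, List.length_append, hlength₁, hlength₂]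

theorem leadingIndex_permuteCopies (g : A) (x : FreePower C K) :
    leadingIndex (permuteCopies g x) = (leadingIndex x).map (g • ·) := by
  by_cases hx : x = 1
  · rw [hx, map_one, leadingIndex_one, Option.map_none]
  obtain ⟨i, j, w, rfl⟩ := exists_neWord_prod_eq hx
  obtain ⟨w', hw', -⟩ := exists_neWord_prod_eq_permuteCopies g w
  rw [← hw', leadingIndex_prod, leadingIndex_prod, Option.map_some]

theorem syllableLength_permuteCopies (g : A) (x : FreePower C K) :
    syllableLength (permuteCopies g x) = syllableLength x := by
  by_cases hx : x = 1
  · rw [hx, map_one]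
  obtain ⟨i, j, w, rfl⟩ := exists_neWord_prod_eq hx
  obtain ⟨w', hw', hlength⟩ := exists_neWord_prod_eq_permuteCopies g w
  rw [← hw', syllableLength_prod, syllableLength_prod, hlength]

theorem leadingIndex_left_inv_ne {f g : FreePower C K ⋊[permuteCopies] A}
    (h : leadingIndex f⁻¹.left ≠ leadingIndex g.left) :
    leadingIndex f.left⁻¹ ≠ leadingIndex (permuteCopies f.right g.left) := by
  contrapose h
  rw [SemidirectProduct.inv_left, leadingIndex_permuteCopies, h, leadingIndex_permuteCopies,
    Option.map_map]
  simp [Function.comp_def]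

theorem leadingIndex_left_mul {f g : FreePower C K ⋊[permuteCopies] A} (hf : f.left ≠ 1)
    (h : leadingIndex f⁻¹.left ≠ leadingIndex g.left) :
    leadingIndex (f * g).left = leadingIndex f.left := by
  rw [SemidirectProduct.mul_left, leadingIndex_mul hf (leadingIndex_left_inv_ne h)]

theorem syllableLength_left_mul {f g : FreePower C K ⋊[permuteCopies] A}
    (h : leadingIndex f⁻¹.left ≠ leadingIndex g.left) :
    syllableLength (f * g).left = syllableLength f.left + syllableLength g.left := by
  rw [SemidirectProduct.mul_left, syllableLength_mul (leadingIndex_left_inv_ne h),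
    syllableLength_permuteCopies]

end FreePower

end FreePower

namespace GraphProduct

variable {V : Type} {Γ : SimpleGraph V} {G : V → Type} [∀ v, Group (G v)]

section VertexSubgroups

/-- The inclusion of a vertex group into a graph product. -/
def of (u : V) : G u →* GraphProduct Γ G :=
  (QuotientGroup.mk' (graphProductRels Γ G)).comp Monoid.CoprodI.of

theorem commute_of {u w : V} (h : Γ.Adj u w) (a : G u) (b : G w) :
    Commute (of u a : GraphProduct Γ G) (of w b) := by
  rw [← commutatorElement_eq_one_iff_commute]
  exact (QuotientGroup.eq_one_iff _).2 (Subgroup.subset_normalClosure ⟨u, w, a, b, h, rfl⟩)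

/-- The universal property of a graph product. -/
def lift {L : Type*} [Group L] (f : ∀ u, G u →* L)
    (hf : ∀ u w, Γ.Adj u w → ∀ a b, Commute (f u a) (f w b)) : GraphProduct Γ G →* L :=
  QuotientGroup.lift (graphProductRels Γ G) (Monoid.CoprodI.lift f) <|
    show graphProductRels Γ G ≤ (Monoid.CoprodI.lift f).ker from
      Subgroup.normalClosure_le_normal <| by
        rintro _ ⟨u, w, a, b, h, rfl⟩
        simpa [MonoidHom.mem_ker, commutatorElement_def] using
          commutatorElement_eq_one_iff_commute.2 (hf u w h a b)

theorem lift_of {L : Type*} [Group L] (f : ∀ u, G u →* L)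
    (hf : ∀ u w, Γ.Adj u w → ∀ a b, Commute (f u a) (f w b)) (u : V) (a : G u) :
    lift f hf (of u a) = f u a :=
  Monoid.CoprodI.lift_of f a

theorem of_mem {S : Set V} {u : V} (hu : u ∈ S) (a : G u) : of u a ∈ vertexSubgroup Γ G S :=
  Subgroup.subset_closure ⟨u, hu, a, rfl⟩

theorem vertexSubgroup_le {S : Set V} {P : Subgroup (GraphProduct Γ G)}
    (h : ∀ u ∈ S, ∀ a, of u a ∈ P) : vertexSubgroup Γ G S ≤ P := by
  rw [vertexSubgroup, Subgroup.closure_le]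
  rintro _ ⟨u, hu, a, rfl⟩
  exact h u hu a

theorem closure_range_of :
    Subgroup.closure {x : GraphProduct Γ G | ∃ u a, x = of u a} = ⊤ := by
  refine (Subgroup.eq_top_iff' _).2 fun x => ?_
  obtain ⟨y, rfl⟩ := QuotientGroup.mk'_surjective _ x
  induction y using Monoid.CoprodI.induction_on with
  | one => exact one_mem _
  | of u a => exact Subgroup.subset_closure ⟨u, a, rfl⟩
  | mul x y hx hy => rw [map_mul]; exact mul_mem hx hy

theorem hom_ext {L : Type*} [Group L] {f g : GraphProduct Γ G →* L}
    (h : ∀ u a, f (of u a) = g (of u a)) : f = g :=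
  MonoidHom.eq_of_eqOn_dense closure_range_of <| by
    rintro _ ⟨u, a, rfl⟩
    exact h u a

theorem vertexSubgroup_univ : vertexSubgroup Γ G Set.univ = ⊤ := by
  rw [eq_top_iff, ← closure_range_of, Subgroup.closure_le]
  rintro _ ⟨u, a, rfl⟩
  exact of_mem (Set.mem_univ u) a

theorem vertexSubgroup_empty : vertexSubgroup Γ G ∅ = ⊥ :=
  le_bot_iff.1 <| vertexSubgroup_le fun _ hu => hu.elim

theorem vertexSubgroup_mono {S T : Set V} (h : S ⊆ T) :
    vertexSubgroup Γ G S ≤ vertexSubgroup Γ G T :=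
  vertexSubgroup_le fun _ hu a => of_mem (h hu) a

theorem of_injective (u : V) : Function.Injective (of u : G u → GraphProduct Γ G) := by
  classical
  let π : GraphProduct Γ G →* G u := lift (Pi.mulSingle u (MonoidHom.id (G u))) fun w w' h a b => by
    by_cases hw : w = u
    · have hw' : w' ≠ u := fun hw' => h.ne (hw.trans hw'.symm)
      simp [Pi.mulSingle_eq_of_ne hw']
    · simp [Pi.mulSingle_eq_of_ne hw]
  refine Function.LeftInverse.injective (g := π) fun a => ?_
  rw [lift_of, Pi.mulSingle_eq_same, MonoidHom.id_apply]

open Classical in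
/-- The retraction of a graph product onto the subgroup of a set `T` of vertices, which kills the
vertex groups of all other vertices. -/
noncomputable def retraction (T : Set V) : GraphProduct Γ G →* GraphProduct Γ G :=
  lift (fun u => if u ∈ T then of u else 1) fun u w h a b => by
    split_ifs <;> simp [commute_of h]

theorem retraction_of_mem {T : Set V} {x : GraphProduct Γ G} (hx : x ∈ vertexSubgroup Γ G T) :
    retraction T x = x := by
  have h : vertexSubgroup Γ G T ≤ (retraction T).eqLocus (MonoidHom.id _) :=
    vertexSubgroup_le fun u hu a => by
      change retraction T (of u a) = of u a
      rw [retraction, lift_of, if_pos hu]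
  exact h hx

theorem retraction_mem {S : Set V} (T : Set V) {x : GraphProduct Γ G}
    (hx : x ∈ vertexSubgroup Γ G S) : retraction T x ∈ vertexSubgroup Γ G (S ∩ T) := by
  have h : vertexSubgroup Γ G S ≤ (vertexSubgroup Γ G (S ∩ T)).comap (retraction T) :=
    vertexSubgroup_le fun u hu a => by
      rw [Subgroup.mem_comap, retraction, lift_of]
      split_ifs with hT
      · exact of_mem (Set.mem_inter hu hT) a
      · exact one_mem _
  exact h hx

theorem vertexSubgroup_inter (S T : Set V) :
    vertexSubgroup Γ G (S ∩ T) = vertexSubgroup Γ G S ⊓ vertexSubgroup Γ G T := by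
  refine le_antisymm (le_inf (vertexSubgroup_mono Set.inter_subset_left)
    (vertexSubgroup_mono Set.inter_subset_right)) ?_
  rintro x ⟨hxS, hxT⟩
  rw [← retraction_of_mem hxT]
  exact retraction_mem T hxS

theorem vertexSubgroup_biInter {ι : Type*} {s : Set ι} (hs : s.Finite) (T : ι → Set V) :
    vertexSubgroup Γ G (⋂ i ∈ s, T i) = ⨅ i ∈ s, vertexSubgroup Γ G (T i) := by
  induction s, hs using Set.Finite.induction_on with
  | empty => simp [vertexSubgroup_univ]
  | insert _ _ ih => rw [Set.biInter_insert, iInf_insert, vertexSubgroup_inter, ih]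

theorem of_mem_vertexSubgroup_iff {S : Set V} {u : V} {a : G u} (ha : a ≠ 1) :
    of u a ∈ vertexSubgroup Γ G S ↔ u ∈ S := by
  refine ⟨fun h => by_contra fun hu => ha ?_, fun hu => of_mem hu a⟩
  have h' : of u a ∈ vertexSubgroup Γ G (S ∩ {u}) :=
    (vertexSubgroup_inter S {u}).ge ⟨h, of_mem (Set.mem_singleton u) a⟩
  rw [Set.inter_singleton_eq_empty.2 hu, vertexSubgroup_empty, Subgroup.mem_bot] at h'
  exact of_injective u (h'.trans (map_one _).symm)

theorem commute_of_mem_vertexSubgroup {S : Set V} {u : V} (hS : ∀ w ∈ S, Γ.Adj w u) (a : G u)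
    {x : GraphProduct Γ G} (hx : x ∈ vertexSubgroup Γ G S) : Commute x (of u a) := by
  have h : vertexSubgroup Γ G S ≤ Subgroup.centralizer {of u a} :=
    vertexSubgroup_le fun w hw b =>
      Subgroup.mem_centralizer_singleton_iff.2 (commute_of (hS w hw) b a)
  exact Subgroup.mem_centralizer_singleton_iff.1 (h hx)

theorem vertexSubgroup_normal {S : Set V} (hS : ∀ u ∈ S, ∀ w ∉ S, Γ.Adj u w) :
    (vertexSubgroup Γ G S).Normal := by
  rw [← Subgroup.normalizer_eq_top_iff, eq_top_iff, ← closure_range_of, Subgroup.closure_le]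
  rintro _ ⟨w, a, rfl⟩
  by_cases hw : w ∈ S
  · exact Subgroup.le_normalizer (of_mem hw a)
  · refine Subgroup.centralizer_le_normalizer _ <| Subgroup.mem_centralizer_iff.2 fun x hx => ?_
    exact commute_of_mem_vertexSubgroup (fun u hu => hS u hu w hw) a hx

variable (Γ G) in
/-- The subgroup `𝒢(lk(v))` of the link of a vertex. -/
abbrev linkSubgroup (v : V) : Subgroup (GraphProduct Γ G) :=
  vertexSubgroup Γ G (Γ.neighborSet v)

theorem commute_of_mem_linkSubgroup {v : V} {x : GraphProduct Γ G} (hx : x ∈ linkSubgroup Γ G v)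
    (a : G v) : Commute x (of v a) :=
  commute_of_mem_vertexSubgroup (fun _ hw => hw.symm) a hx

end VertexSubgroups

section Splitting

open SemidirectProduct

variable (Γ G) in
/-- The cosets of `𝒢(lk(v))`, which index the conjugates of `G v`. -/
abbrev LinkCoset (v : V) : Type :=
  GraphProduct Γ G ⧸ linkSubgroup Γ G v

variable (Γ G) in
/-- The semidirect product of the free product of copies of `G v` indexed by `LinkCoset Γ G v` with
the graph product, acting on the indices. The copy with index `g 𝒢(lk(v))` stands for the conjugate
`g (G v) g⁻¹`. -/
abbrev LinkSemidirect (v : V) : Type :=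
  FreePower (LinkCoset Γ G v) (G v) ⋊[FreePower.permuteCopies] GraphProduct Γ G

theorem inr_mul_inl_of {v : V} (g : GraphProduct Γ G) (c : LinkCoset Γ G v) (a : G v) :
    (inr g * inl (FreePower.of c a) : LinkSemidirect Γ G v) =
      inl (FreePower.of (g • c) a) * inr g := by
  rw [← FreePower.permuteCopies_of, inl_aut, map_inv, inv_mul_cancel_right]

theorem commute_inl_of_inr_of {v w : V} (h : Γ.Adj v w) (a : G v) (b : G w) :
    Commute (inl (FreePower.of ((1 : GraphProduct Γ G) : LinkCoset Γ G v) a) : LinkSemidirect Γ G v)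
      (inr (of w b)) := by
  have hb : (of w b : GraphProduct Γ G) • ((1 : GraphProduct Γ G) : LinkCoset Γ G v) =
      (1 : GraphProduct Γ G) := by
    rw [MulAction.Quotient.smul_coe, smul_eq_mul, mul_one, eq_comm, QuotientGroup.eq, inv_one,
      one_mul]
    exact of_mem (S := Γ.neighborSet v) h b
  rw [commute_iff_eq, inr_mul_inl_of, hb]

open Classical in
/-- The embedding of a graph product into `LinkSemidirect` which sends `G v` to the copy of `G v` at
the trivial coset and is the identity into the right factor on the other vertex groups. -/
noncomputable def toSemidirect (v : V) : GraphProduct Γ G →* LinkSemidirect Γ G v :=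
  lift (Function.update (fun w => inr.comp (of w)) v
      (inl.comp (FreePower.of ((1 : GraphProduct Γ G) : LinkCoset Γ G v)))) fun u w h a b => by
    rcases eq_or_ne u v with rfl | hu
    · simpa [h.ne'] using commute_inl_of_inr_of h a b
    rcases eq_or_ne w v with rfl | hw
    · simpa [h.ne] using (commute_inl_of_inr_of h.symm b a).symm
    · simpa [hu, hw] using (commute_of h a b).map inr

theorem toSemidirect_of_self (v : V) (a : G v) :
    toSemidirect v (of v a : GraphProduct Γ G) =
      inl (FreePower.of ((1 : GraphProduct Γ G) : LinkCoset Γ G v) a) := by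
  classical
  rw [toSemidirect, lift_of, Function.update_self, MonoidHom.comp_apply]

theorem toSemidirect_of_ne {u v : V} (h : u ≠ v) (a : G u) :
    toSemidirect v (of u a : GraphProduct Γ G) = inr (of u a) := by
  classical
  rw [toSemidirect, lift_of, Function.update_of_ne h, MonoidHom.comp_apply]

/-- The conjugation `a ↦ g a g⁻¹` of elements of `G v`, as a function of the coset of `g` modulo
`𝒢(lk(v))`. -/
def conjOf {v : V} (c : LinkCoset Γ G v) : G v →* GraphProduct Γ G :=
  Quotient.liftOn' c (fun g => (MulAut.conj g).toMonoidHom.comp (of v)) fun g h hgh => by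
    ext a
    have hcomm := commute_of_mem_linkSubgroup (QuotientGroup.leftRel_apply.1 hgh) a
    calc g * of v a * g⁻¹
        = g * (g⁻¹ * h * of v a * (g⁻¹ * h)⁻¹) * g⁻¹ := by rw [hcomm.eq, mul_inv_cancel_right]
      _ = h * of v a * h⁻¹ := by group

theorem conjOf_mk {v : V} (g : GraphProduct Γ G) (a : G v) :
    conjOf (g : LinkCoset Γ G v) a = g * of v a * g⁻¹ :=
  rfl

/-- The left inverse of `toSemidirect`. -/
def ofSemidirect (v : V) : LinkSemidirect Γ G v →* GraphProduct Γ G :=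
  SemidirectProduct.lift (Monoid.CoprodI.lift conjOf) (MonoidHom.id _) fun g =>
    Monoid.CoprodI.ext_hom _ _ <| Quotient.ind' fun h => by
      ext a
      change Monoid.CoprodI.lift conjOf (FreePower.permuteCopies g (FreePower.of ↑h a)) =
        g * Monoid.CoprodI.lift conjOf (FreePower.of ↑h a) * g⁻¹
      rw [FreePower.permuteCopies_of, Monoid.CoprodI.lift_of, Monoid.CoprodI.lift_of,
        MulAction.Quotient.smul_coe, conjOf_mk, conjOf_mk, smul_eq_mul]
      group

theorem ofSemidirect_toSemidirect (v : V) (g : GraphProduct Γ G) :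
    ofSemidirect v (toSemidirect v g) = g := by
  have h : (ofSemidirect v).comp (toSemidirect v) = MonoidHom.id (GraphProduct Γ G) := by
    refine hom_ext fun u a => ?_
    rw [MonoidHom.comp_apply, MonoidHom.id_apply]
    rcases eq_or_ne u v with rfl | hu
    · rw [toSemidirect_of_self, ofSemidirect, SemidirectProduct.lift_inl, Monoid.CoprodI.lift_of,
        conjOf_mk, one_mul, inv_one, mul_one]
    · rw [toSemidirect_of_ne hu, ofSemidirect, SemidirectProduct.lift_inr, MonoidHom.id_apply]
  exact DFunLike.congr_fun h g

theorem toSemidirect_eq_inr {v : V} {g : GraphProduct Γ G} (h : (toSemidirect v g).left = 1) :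
    toSemidirect v g = inr g := by
  have hg := inl_left_mul_inr_right (toSemidirect v g)
  rw [h, map_one, one_mul] at hg
  have hright : (toSemidirect v g).right = g := by
    conv_rhs => rw [← ofSemidirect_toSemidirect v g, ← hg]
    rw [ofSemidirect, SemidirectProduct.lift_inr, MonoidHom.id_apply]
  rw [← hg, hright]

end Splitting

section LeadingCoset

open SemidirectProduct

/-- The index of the first syllable of `g` in the free product of the conjugates of `G v`, which is
`none` if `g` has no syllable there. In the Bass–Serre tree of the splitting of the graph product
over `𝒢(lk(v))`, it records the direction of the path from a base point to its image under `g`. -/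
noncomputable def leadingCoset (v : V) (g : GraphProduct Γ G) : Option (LinkCoset Γ G v) :=
  leadingIndex (toSemidirect v g).left

/-- The number of syllables of `g` in the free product of the conjugates of `G v`. -/
noncomputable def syllables (v : V) (g : GraphProduct Γ G) : ℕ :=
  syllableLength (toSemidirect v g).left

variable {v : V} {f g : GraphProduct Γ G} {c : LinkCoset Γ G v}

theorem leadingCoset_inv_eq_none_iff : leadingCoset v g⁻¹ = none ↔ leadingCoset v g = none := by
  simp only [leadingCoset, leadingIndex_eq_none_iff, map_inv, inv_left,
    EmbeddingLike.map_eq_one_iff, inv_eq_one]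

theorem leadingCoset_mul (hf : leadingCoset v f = some c)
    (hfg : leadingCoset v f⁻¹ ≠ leadingCoset v g) : leadingCoset v (f * g) = some c := by
  have hf₁ : (toSemidirect v f).left ≠ 1 := fun h => by
    rw [leadingCoset, leadingIndex_eq_none_iff.2 h] at hf
    cases hf
  rw [leadingCoset, map_inv] at hfg
  rw [leadingCoset, map_mul, FreePower.leadingIndex_left_mul hf₁ hfg]
  exact hf

theorem syllables_mul (hfg : leadingCoset v f⁻¹ ≠ leadingCoset v g) :
    syllables v (f * g) = syllables v f + syllables v g := by
  rw [leadingCoset, map_inv] at hfg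
  rw [syllables, map_mul, FreePower.syllableLength_left_mul hfg]
  rfl

theorem syllables_pos (hg : leadingCoset v g ≠ none) : 0 < syllables v g :=
  syllableLength_pos fun h => hg (leadingIndex_eq_none_iff.2 h)

theorem toSemidirect_of_leadingCoset_eq_none (hg : leadingCoset v g = none) :
    toSemidirect v g = inr g :=
  toSemidirect_eq_inr (leadingIndex_eq_none_iff.1 hg)

theorem leadingCoset_eq_none_of_mem {T : Set V} (hv : v ∉ T) (hg : g ∈ vertexSubgroup Γ G T) :
    leadingCoset v g = none := by
  have h : vertexSubgroup Γ G T ≤ (toSemidirect v).eqLocus inr :=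
    vertexSubgroup_le fun u hu a => toSemidirect_of_ne (ne_of_mem_of_not_mem hu hv) a
  rw [leadingCoset, show toSemidirect v g = inr g from h hg, left_inr, leadingIndex_one]

theorem leadingCoset_conj_of (hg : leadingCoset v g = none) {a : G v} (ha : a ≠ 1) :
    leadingCoset v (g * of v a * g⁻¹) = some ↑g := by
  rw [leadingCoset, map_mul, map_mul, map_inv, toSemidirect_of_leadingCoset_eq_none hg,
    toSemidirect_of_self, inr_mul_inl_of, mul_inv_cancel_right, left_inl,
    MulAction.Quotient.smul_coe, smul_eq_mul, mul_one]
  exact leadingIndex_of ha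

theorem leadingCoset_mul_of_ne {u : V} (hu : u ≠ v) (a : G u) :
    leadingCoset v (g * of u a) = leadingCoset v g := by
  rw [leadingCoset, map_mul, toSemidirect_of_ne hu, mul_left, left_inr, map_one, mul_one]
  rfl

theorem mk_eq_or_of_not_leadingCoset_mul_of_iff {a : G v}
    (h : ¬ (leadingCoset v (g * of v a) = some c ↔ leadingCoset v g = some c)) :
    (g : LinkCoset Γ G v) = c ∨ ((g * of v a : GraphProduct Γ G) : LinkCoset Γ G v) = c := by
  have hleft : (toSemidirect v (g * of v a)).left =
      (toSemidirect v g).left * FreePower.of ((toSemidirect v g).right : LinkCoset Γ G v) a := by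
    rw [map_mul, toSemidirect_of_self, mul_left, left_inl, FreePower.permuteCopies_of,
      MulAction.Quotient.smul_coe, smul_eq_mul, mul_one]
  have hright : (toSemidirect v (g * of v a)).right = (toSemidirect v g).right := by
    rw [map_mul, toSemidirect_of_self, mul_right, right_inl, mul_one]
  rw [leadingCoset, hleft] at h
  obtain ⟨hc, hg | hga⟩ := eq_and_eq_one_or_of_not_leadingIndex_iff h
  · left
    rw [← hc, toSemidirect_eq_inr hg, right_inr]
  · right
    rw [← hc, ← hright, toSemidirect_eq_inr (hleft.trans hga), right_inr]

end LeadingCoset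

section HalfSpace

open Filter

/-- The set of all `g` such that the syllables of `y * g⁻¹` begin with the index `y 𝒢(lk(v))`. It
corresponds to a half-tree of the Bass–Serre tree. The inverse is there because `IsAlmostInvariant`
is about left translates, while `leadingCoset` behaves well under right multiplication. -/
def halfSpace (v : V) (y : GraphProduct Γ G) : Set (GraphProduct Γ G) :=
  {g | leadingCoset v (y * g⁻¹) = some ↑y}

variable {v : V}

theorem mk_eq_of_not_of_mul_mem_halfSpace_iff {y g : GraphProduct Γ G} {u : V} {a : G u}
    (h : ¬ (of u a * g ∈ halfSpace v y ↔ g ∈ halfSpace v y)) :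
    (g : LinkCoset Γ G v) = (1 : GraphProduct Γ G) ∨
      (g : LinkCoset Γ G v) = ((of u a)⁻¹ : GraphProduct Γ G) := by
  simp only [halfSpace, Set.mem_ofPred_eq, mul_inv_rev, ← mul_assoc, ← map_inv] at h
  rcases eq_or_ne u v with rfl | hu
  · refine (mk_eq_or_of_not_leadingCoset_mul_of_iff h).imp (fun hg => ?_) fun hg => ?_
    · rw [eq_comm, QuotientGroup.eq] at hg ⊢
      simpa [mul_assoc] using hg
    · rw [QuotientGroup.eq] at hg ⊢
      simpa [mul_assoc] using inv_mem hg
  · exact absurd (by rw [leadingCoset_mul_of_ne hu]) h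

theorem isAlmostInvariant_halfSpace (y : GraphProduct Γ G) :
    IsAlmostInvariant (linkSubgroup Γ G v) (halfSpace v y) := by
  refine isAlmostInvariant_of_closure_eq_top closure_range_of ?_
  rintro _ ⟨u, a, rfl⟩
  have hfin : ({↑(1 : GraphProduct Γ G), ↑(of u a : GraphProduct Γ G)⁻¹} :
      Set (LinkCoset Γ G v)).Finite := Set.toFinite _
  filter_upwards [preimage_mem_comap hfin.compl_mem_cofinite] with g hg
  exact by_contra fun h => hg (mk_eq_of_not_of_mul_mem_halfSpace_iff h)

end HalfSpace

section PingPong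

variable {v : V} {f n : GraphProduct Γ G} {c : LinkCoset Γ G v}

theorem exists_leadingCoset_pow_inv_mul_ne (hf : leadingCoset v f = some c)
    (hf' : leadingCoset v f⁻¹ ≠ some c) (g : GraphProduct Γ G) :
    ∃ k : ℕ, leadingCoset v ((f ^ k)⁻¹ * g) ≠ some c := by
  by_contra! h
  -- Cancelling a factor `f` in front removes the syllables of `f`, so the length drops forever.
  have hlength (k : ℕ) : syllables v g = k * syllables v f + syllables v ((f ^ k)⁻¹ * g) := by
    induction k with
    | zero => simp
    | succ k ih =>
      have hmul : (f ^ k)⁻¹ * g = f * ((f ^ (k + 1))⁻¹ * g) := by group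
      rw [ih, hmul, syllables_mul (by rwa [h]), add_one_mul, add_assoc]
  have hpos : 0 < syllables v f := syllables_pos (by simp [hf])
  have := hlength (syllables v g + 1)
  nlinarith

theorem exists_leadingCoset_pow_mul_eq (hf : leadingCoset v f = some c)
    (hf' : leadingCoset v f⁻¹ ≠ some c) (g : GraphProduct Γ G) :
    ∃ k : ℕ, leadingCoset v (f ^ k * g) = some c := by
  obtain ⟨d, hd⟩ := Option.ne_none_iff_exists'.1 <|
    leadingCoset_inv_eq_none_iff.not.2 (hf ▸ Option.some_ne_none c : leadingCoset v f ≠ none)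
  obtain ⟨k, hk⟩ := exists_leadingCoset_pow_inv_mul_ne hd
    (by rw [inv_inv, hf, ← hd]; exact hf'.symm) g
  rw [inv_pow, inv_inv, ← hd] at hk
  exact ⟨k + 1, by rw [pow_succ', mul_assoc, leadingCoset_mul hf hk.symm]⟩

theorem finiteIndex_sup_linkSubgroup_of_leadingCoset {N : Subgroup (GraphProduct Γ G)}
    [hN : N.Normal] (hfg : N.FG) (hfN : f ∈ N) (hf : leadingCoset v f = some c)
    (hf' : leadingCoset v f⁻¹ ≠ some c) : (N ⊔ linkSubgroup Γ G v).FiniteIndex := by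
  obtain ⟨y, rfl⟩ := QuotientGroup.mk_surjective c
  refine (isAlmostInvariant_halfSpace y).finiteIndex_sup hfg fun g => ?_
  suffices h : ∃ n ∈ N, ¬ (leadingCoset v (n * (y * g⁻¹)) = some ↑y ↔
      leadingCoset v (y * g⁻¹) = some ↑y) by
    obtain ⟨n, hn, h⟩ := h
    refine ⟨g * y⁻¹ * n⁻¹ * (g * y⁻¹)⁻¹, hN.conj_mem _ (inv_mem hn) _, ?_⟩
    convert h using 3
    · simp [halfSpace, mul_assoc]
    · rfl
  by_cases hg : leadingCoset v (y * g⁻¹) = some ↑y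
  · obtain ⟨k, hk⟩ := exists_leadingCoset_pow_inv_mul_ne hf hf' (y * g⁻¹)
    exact ⟨_, inv_mem (pow_mem hfN k), by tauto⟩
  · obtain ⟨k, hk⟩ := exists_leadingCoset_pow_mul_eq hf hf' (y * g⁻¹)
    exact ⟨_, pow_mem hfN k, by tauto⟩

theorem leadingCoset_conj {t : GraphProduct Γ G} {d : LinkCoset Γ G v} (hdc : d ≠ c)
    (ht : leadingCoset v t = some d) (ht' : leadingCoset v t⁻¹ = some d)
    (hn : leadingCoset v n = some c) (hn' : leadingCoset v n⁻¹ = some c) :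
    leadingCoset v (t * n * t⁻¹) = some d := by
  have hnt : leadingCoset v (n * t⁻¹) = some c := leadingCoset_mul hn (by simp [hn', ht', hdc.symm])
  rw [mul_assoc]
  exact leadingCoset_mul ht (by simp [hnt, ht', hdc])

theorem exists_leadingCoset_eq_leadingCoset_inv {u : V} [Nontrivial (G u)] [Nontrivial (G v)]
    (huv : u ≠ v) (hadj : ¬ Γ.Adj v u) (c : LinkCoset Γ G v) :
    ∃ (t : GraphProduct Γ G) (d : LinkCoset Γ G v),
      d ≠ c ∧ leadingCoset v t = some d ∧ leadingCoset v t⁻¹ = some d := by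
  obtain ⟨x, hx, hxc⟩ : ∃ x : GraphProduct Γ G,
      leadingCoset v x = none ∧ (x : LinkCoset Γ G v) ≠ c := by
    have hnone (x : GraphProduct Γ G) (hx : x ∈ vertexSubgroup Γ G {u}) :
        leadingCoset v x = none := leadingCoset_eq_none_of_mem (T := {u}) huv.symm hx
    obtain ⟨b, hb⟩ := exists_ne (1 : G u)
    by_cases hc : ((1 : GraphProduct Γ G) : LinkCoset Γ G v) = c
    · refine ⟨of u b, hnone _ (of_mem (Set.mem_singleton u) b), fun hbc => hadj ?_⟩
      rw [← hc, eq_comm, QuotientGroup.eq, inv_one, one_mul, of_mem_vertexSubgroup_iff hb] at hbc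
      exact hbc
    · exact ⟨1, hnone _ (one_mem _), hc⟩
  obtain ⟨a, ha⟩ := exists_ne (1 : G v)
  refine ⟨x * of v a * x⁻¹, x, hxc, leadingCoset_conj_of hx ha, ?_⟩
  rw [conj_inv, ← map_inv, leadingCoset_conj_of hx (inv_ne_one.2 ha)]

/-- If `n` both begins and ends at `c`, then take the product of `n` with one of its conjugates that
begins and ends at an index other than `c`. -/
theorem exists_leadingCoset_ne_leadingCoset_inv {u : V} [Nontrivial (G u)] [Nontrivial (G v)]
    (huv : u ≠ v) (hadj : ¬ Γ.Adj v u) {N : Subgroup (GraphProduct Γ G)} [hN : N.Normal]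
    (hnN : n ∈ N) (hn : leadingCoset v n = some c) :
    ∃ f ∈ N, leadingCoset v f = some c ∧ leadingCoset v f⁻¹ ≠ some c := by
  by_cases hn' : leadingCoset v n⁻¹ = some c
  swap
  · exact ⟨n, hnN, hn, hn'⟩
  obtain ⟨t, d, hdc, ht, ht'⟩ := exists_leadingCoset_eq_leadingCoset_inv huv hadj c
  have hconj : leadingCoset v (t * n * t⁻¹) = some d := leadingCoset_conj hdc ht ht' hn hn'
  have hconj' : leadingCoset v (t * n * t⁻¹)⁻¹ = some d := by
    rw [conj_inv]
    exact leadingCoset_conj hdc ht ht' hn' (by rwa [inv_inv])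
  refine ⟨n * (t * n * t⁻¹), mul_mem hnN (hN.conj_mem n hnN t), ?_, ?_⟩
  · exact leadingCoset_mul hn (by simp [hn', hconj, hdc.symm])
  · rw [mul_inv_rev, leadingCoset_mul hconj' (by simp [hn', hconj, hdc])]
    simpa using hdc

theorem le_linkSubgroup_of_leadingCoset_eq_none [Nontrivial (G v)]
    {M : Subgroup (GraphProduct Γ G)} [hM : M.Normal]
    (h : ∀ m ∈ M, leadingCoset v m = none) : M ≤ linkSubgroup Γ G v := by
  intro m hm
  obtain ⟨a, ha⟩ := exists_ne (1 : G v)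
  by_contra hmL
  have hconj {b : G v} (hb : b ≠ 1) : leadingCoset v (m * of v b * m⁻¹) = some ↑m :=
    leadingCoset_conj_of (h m hm) hb
  have hcomm : leadingCoset v (m * of v a * m⁻¹ * (of v a)⁻¹) = some ↑m := by
    refine leadingCoset_mul (hconj ha) ?_
    have ha' : leadingCoset v (of v a⁻¹ : GraphProduct Γ G) = some ↑(1 : GraphProduct Γ G) := by
      simpa using leadingCoset_conj_of (h 1 (one_mem _)) (inv_ne_one.2 ha)
    rw [conj_inv, ← map_inv, hconj (inv_ne_one.2 ha), ha', ne_eq, Option.some_inj, eq_comm,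
      QuotientGroup.eq, inv_one, one_mul]
    exact hmL
  have hcomm_mem : m * of v a * m⁻¹ * (of v a)⁻¹ ∈ M := by
    simpa only [mul_assoc] using mul_mem hm (hM.conj_mem _ (inv_mem hm) (of v a))
  rw [h _ hcomm_mem] at hcomm
  cases hcomm

theorem le_linkSubgroup_of_le_vertexSubgroup [Nontrivial (G v)] {M : Subgroup (GraphProduct Γ G)}
    [M.Normal] {T : Set V} (hv : v ∉ T) (hM : M ≤ vertexSubgroup Γ G T) : M ≤ linkSubgroup Γ G v :=
  le_linkSubgroup_of_leadingCoset_eq_none fun _ hm => leadingCoset_eq_none_of_mem hv (hM hm)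

end PingPong

section Full

theorem not_le_linkSubgroup_of_not_isJoinOfTwo [∀ v, Nontrivial (G v)]
    {M : Subgroup (GraphProduct Γ G)} [M.Normal] {S : Set V} (hS : S.Finite)
    (hjoin : ¬ IsJoinOfTwo Γ S) (hM : M ≠ ⊥) (hMS : M ≤ vertexSubgroup Γ G S) {v : V}
    (hv : v ∈ S) : ¬ M ≤ linkSubgroup Γ G v := by
  intro hMv
  let B : Set V := {u ∈ S | M ≤ linkSubgroup Γ G u}
  refine hjoin ⟨S \ B, B, ?_, ⟨v, hv, hMv⟩, Set.disjoint_sdiff_left,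
    Set.sdiff_union_of_subset (Set.sep_subset _ _), ?_⟩
  · by_contra hB
    rw [Set.not_nonempty_iff_eq_empty, Set.sdiff_eq_empty] at hB
    refine hM (eq_bot_iff.2 ?_)
    have hempty : S ∩ ⋂ u ∈ S, Γ.neighborSet u = ∅ :=
      Set.eq_empty_of_forall_notMem fun u ⟨hu, hadj⟩ => Γ.irrefl (Set.mem_iInter₂.1 hadj u hu)
    rw [← vertexSubgroup_empty, ← hempty, vertexSubgroup_inter, vertexSubgroup_biInter hS]
    exact le_inf hMS (le_iInf₂ fun u hu => (hB hu).2)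
  · rintro w ⟨hwS, hwB⟩ u ⟨-, hu⟩
    by_contra hadj
    exact hwB ⟨hwS, le_linkSubgroup_of_le_vertexSubgroup (fun h => hadj h.symm) hu⟩

end Full

end GraphProduct

section JoinDecomposition

open SimpleGraph

variable {V : Type} {Γ : SimpleGraph V}

theorem adj_of_compl_connectedComponent_ne {C D : Γᶜ.ConnectedComponent} (hCD : C ≠ D) {a b : V}
    (ha : a ∈ C.supp) (hb : b ∈ D.supp) : Γ.Adj a b := by
  by_contra hab
  have hne : a ≠ b := fun h => hCD (ha.symm.trans (h ▸ hb))
  exact hCD (ha.symm.trans ((ConnectedComponent.sound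
    (Adj.reachable ((compl_adj _ _ _).2 ⟨hne, hab⟩))).trans hb))

theorem not_isJoinOfTwo_compl_connectedComponent (C : Γᶜ.ConnectedComponent) :
    ¬ IsJoinOfTwo Γ C.supp := by
  rintro ⟨A, B, ⟨a, ha⟩, ⟨b, hb⟩, hdisj, hAB, hadj⟩
  have haC : a ∈ C.supp := hAB ▸ Or.inl ha
  have hbC : b ∈ C.supp := hAB ▸ Or.inr hb
  obtain ⟨p⟩ := C.reachable_of_mem_supp haC hbC
  obtain ⟨e, -, heA, heA'⟩ := p.exists_boundary_dart A ha (Set.disjoint_right.1 hdisj hb)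
  have hsnd : e.snd ∈ A ∪ B := hAB ▸ C.mem_supp_of_adj_mem_supp (hAB ▸ Or.inl heA) e.adj
  exact ((compl_adj _ _ _).1 e.adj).2 (hadj _ heA _ (hsnd.resolve_left heA'))

theorem exists_isJoinDecomposition [Finite V] (Γ : SimpleGraph V) :
    ∃ (k : ℕ) (P : Fin k → Set V), IsJoinDecomposition Γ P := by
  obtain ⟨k, ⟨e⟩⟩ := Finite.exists_equiv_fin Γᶜ.ConnectedComponent
  refine ⟨k, fun i => (e.symm i).supp, fun i => (e.symm i).nonempty_supp, fun v => ?_,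
    fun i j hij a ha b hb => adj_of_compl_connectedComponent_ne (e.symm.injective.ne hij) ha hb,
    fun i => not_isJoinOfTwo_compl_connectedComponent _⟩
  refine ⟨e (Γᶜ.connectedComponentMk v), by simp, fun i hi => ?_⟩
  rw [(ConnectedComponent.mem_supp_iff _ _).1 hi, Equiv.apply_symm_apply]

end JoinDecomposition

theorem IsFullSubgroup.not_le_linkSubgroup {V : Type} [Finite V] {Γ : SimpleGraph V} {G : V → Type}
    [∀ v, Group (G v)] [∀ v, Nontrivial (G v)] {N : Subgroup (GraphProduct Γ G)} [N.Normal]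
    (hN : IsFullSubgroup Γ G N) (v : V) : ¬ N ≤ GraphProduct.linkSubgroup Γ G v := by
  obtain ⟨k, P, hP⟩ := exists_isJoinDecomposition Γ
  have ⟨_, hpart, hadj, hjoin⟩ := hP
  obtain ⟨i, hi, -⟩ := hpart v
  have : (vertexSubgroup Γ G (P i)).Normal := GraphProduct.vertexSubgroup_normal fun u hu w hw => by
    obtain ⟨j, hj, -⟩ := hpart w
    exact hadj i j (by rintro rfl; exact hw hj) u hu w hj
  exact fun h => GraphProduct.not_le_linkSubgroup_of_not_isJoinOfTwo (Set.toFinite _) (hjoin i)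
    (hN k P hP i) inf_le_right hi (inf_le_left.trans h)

theorem finite_index_of_N_join_link_subgroup_general
    {V : Type} (Γ : SimpleGraph V) (G : V → Type)
    [∀ v, Group (G v)] [∀ v, Nontrivial (G v)] {v : V} (hv : ¬ IsCentralVertex Γ v)
    (N : Subgroup (GraphProduct Γ G)) [N.Normal] (hfg : N.FG)
    (hN : ¬ N ≤ vertexSubgroup Γ G (Γ.neighborSet v)) :
    (N ⊔ vertexSubgroup Γ G (Γ.neighborSet v)).FiniteIndex := by
  obtain ⟨u, huv, hadj⟩ : ∃ u, u ≠ v ∧ ¬ Γ.Adj v u := by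
    simpa only [IsCentralVertex, not_forall, exists_prop] using hv
  obtain ⟨n, hnN, hn⟩ : ∃ n ∈ N, GraphProduct.leadingCoset v n ≠ none := by
    by_contra! h
    exact hN (GraphProduct.le_linkSubgroup_of_leadingCoset_eq_none h)
  obtain ⟨c, hc⟩ := Option.ne_none_iff_exists'.1 hn
  obtain ⟨f, hfN, hf, hf'⟩ :=
    GraphProduct.exists_leadingCoset_ne_leadingCoset_inv huv hadj hnN hc
  exact GraphProduct.finiteIndex_sup_linkSubgroup_of_leadingCoset hfg hfN hf hf'

theorem finite_index_of_N_join_link_subgroup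
    {V : Type} [Fintype V] (Γ : SimpleGraph V) (G : V → Type)
    [∀ v, Group (G v)] [∀ v, Nontrivial (G v)]
    (hnc : ∀ v : V, ¬ IsCentralVertex Γ v)
    (N : Subgroup (GraphProduct Γ G)) [N.Normal]
    (hfg : N.FG) (hfull : IsFullSubgroup Γ G N) :
    ∀ v : V, (N ⊔ vertexSubgroup Γ G (Γ.neighborSet v)).FiniteIndex := by
  intro v
  exact finite_index_of_N_join_link_subgroup_general Γ G (hnc v) N hfg (hfull.not_le_linkSubgroup v)
end
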